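/- arXiv:2501.16520 — 3 statements merged into one kernel-verified Lean document; each statement's English description precedes it below -/
import Mathlib

section
/- Suppose Assumptions A1 and A2 hold and let α, ε > 0. Let t ↦ (x(t), y(t)), t ≥ 0, be a continuously differentiable solution of the relaxed safe gradient flow (RXGF) with h(x(0), y(0)) ≤ ε². Set c := μ_g² / (μ_g² + (L_{yx}^g)²) and define E(t) := f(x(t), y(t)) − f*_ε + c ∫₀ᵗ ‖F(x(τ), y(τ))‖² dτ, where f*_ε is the optimal value of the relaxed problem min f(x,y) subject to h(x,y) ≤ ε². Then E(t) ≤ E(0) for all t ≥ 0, and in particular (1/t) ∫₀ᵗ ‖∇ℓ(x(τ))‖² dτ ≤ 2 M₁² ε² / μ_g² + (2/(c t)) (f(x(0), y(0)) − f*_ε) for all t > 0. -/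
open Set MeasureTheory
open scoped NNReal RealInnerProductSpace

noncomputable section

/-- `Vec k` is the Euclidean space `ℝ^k`. -/
abbrev Vec (k : ℕ) : Type := EuclideanSpace ℝ (Fin k)

/-- Partial gradient of `f(x, y)` with respect to `x`. -/
noncomputable def gradx {n m : ℕ} (f : Vec n → Vec m → ℝ) (x : Vec n) (y : Vec m) : Vec n :=
  gradient (fun x' => f x' y) x

/-- Partial gradient of `f(x, y)` with respect to `y`. -/
noncomputable def grady {n m : ℕ} (f : Vec n → Vec m → ℝ) (x : Vec n) (y : Vec m) : Vec m :=
  gradient (fun y' => f x y') y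

/-- The compact constraint function `h(x,y) = ‖∇_y g(x,y)‖²`. -/
noncomputable def hbar {n m : ℕ} (g : Vec n → Vec m → ℝ) (x : Vec n) (y : Vec m) : ℝ :=
  ‖grady g x y‖ ^ 2

/-- The surrogate map `F(x,y) = ∇ₓ f(x,y) − (∇²_{yx} g(x,y))ᵀ v(x,y)`. -/
noncomputable def Fsur {n m : ℕ} (f : Vec n → Vec m → ℝ)
    (Gyx : Vec n → Vec m → Vec n →L[ℝ] Vec m) (v : Vec n → Vec m → Vec m)
    (x : Vec n) (y : Vec m) : Vec n :=
  gradx f x y - ContinuousLinearMap.adjoint (Gyx x y) (v x y)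

/-! Let `V` be the right-hand side of the flow. Complementarity `λ ⟪∇h, V⟫ ≥ 0` on the feasible set,
which the flow preserves, gives `d/dt f ≤ -‖V‖²`. Both components of `∇h` are built from
`∇_y g`: they are `2 (∇²_{yx} g)ᵀ ∇_y g` and `2 ∇²_{yy} g ∇_y g`. Therefore the multiplier
contributes to `V` exactly as if `v` were replaced by `w = v + 2 λ ∇_y g`, the `y`-component of `V`
controls `w` through the strong monotonicity of `∇_y g`, and the Cauchy-Schwarz inequality turns
this into `c ‖F‖² ≤ ‖V‖²`. For the averaged bound, `‖∇ℓ‖² ≤ 2 ‖F‖² + 2 ‖∇ℓ - F‖²`, where strong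
monotonicity bounds `‖y - y*(x)‖` by `ε / μ` on the feasible set. -/

section StrongMonotonicity

variable {E : Type*} [NormedAddCommGroup E] [InnerProductSpace ℝ E]

/-- `μ`-strong monotonicity of a vector field `u`, the first-order form of strong convexity when
`u` is a gradient. -/
def IsStronglyMonotone (μ : ℝ) (u : E → E) : Prop :=
  ∀ y z, μ * ‖y - z‖ ^ 2 ≤ ⟪u y - u z, y - z⟫

variable {μ : ℝ} {u : E → E}

theorem IsStronglyMonotone.mul_norm_sub_le (hu : IsStronglyMonotone μ u) (y z : E) :
    μ * ‖y - z‖ ≤ ‖u y - u z‖ := by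
  rcases (norm_nonneg (y - z)).eq_or_lt with h | h
  · rw [← h, mul_zero]
    exact norm_nonneg _
  · refine le_of_mul_le_mul_right ?_ h
    calc μ * ‖y - z‖ * ‖y - z‖ = μ * ‖y - z‖ ^ 2 := by ring
      _ ≤ ⟪u y - u z, y - z⟫ := hu y z
      _ ≤ ‖u y - u z‖ * ‖y - z‖ := real_inner_le_norm _ _

theorem IsStronglyMonotone.antilipschitzWith (hu : IsStronglyMonotone μ u) (hμ : 0 < μ) :
    AntilipschitzWith (Real.toNNReal μ⁻¹) u := by
  refine AntilipschitzWith.of_le_mul_dist fun y z => ?_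
  rw [Real.coe_toNNReal _ (inv_nonneg.2 hμ.le), inv_mul_eq_div, le_div_iff₀ hμ, mul_comm,
    dist_eq_norm, dist_eq_norm]
  exact hu.mul_norm_sub_le y z

theorem IsStronglyMonotone.of_hasFDerivAt (hu : IsStronglyMonotone μ u) {y : E} {G : E →L[ℝ] E}
    (hG : HasFDerivAt u G y) : IsStronglyMonotone μ G := by
  intro a b
  rw [← map_sub]
  set w := a - b
  have hline : HasDerivAt (fun s : ℝ => u (y + s • w)) (G w) 0 := by
    have hG' : HasFDerivAt u G (y + (0 : ℝ) • w) := by simpa using hG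
    refine hG'.comp_hasDerivAt 0 ?_
    simpa using ((hasDerivAt_id (0 : ℝ)).smul_const w).const_add y
  have hderiv : HasDerivAt (fun s : ℝ => ⟪u (y + s • w), w⟫ - s * (μ * ‖w‖ ^ 2))
      (⟪G w, w⟫ - μ * ‖w‖ ^ 2) 0 := by
    simpa using (hline.inner ℝ (hasDerivAt_const 0 w)).fun_sub
      ((hasDerivAt_id (0 : ℝ)).mul_const (μ * ‖w‖ ^ 2))
  have hmono : Monotone fun s : ℝ => ⟪u (y + s • w), w⟫ - s * (μ * ‖w‖ ^ 2) := by
    refine monotone_iff_forall_lt.2 fun r s hrs => ?_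
    have h := hu (y + s • w) (y + r • w)
    rw [add_sub_add_left_eq_sub, ← sub_smul, norm_smul, real_inner_smul_right, inner_sub_left,
      Real.norm_of_nonneg (sub_pos.2 hrs).le] at h
    have hquot : (s - r) * (μ * ‖w‖ ^ 2) ≤ ⟪u (y + s • w), w⟫ - ⟪u (y + r • w), w⟫ :=
      le_of_mul_le_mul_left (by linarith) (sub_pos.2 hrs)
    linarith
  have h := hmono.deriv_nonneg (x := 0)
  rw [hderiv.deriv] at h
  linarith

variable [CompleteSpace E] {φ : E → ℝ}

theorem isStronglyMonotone_zero_of_convexOn (hφ : ConvexOn ℝ univ φ)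
    (hu : ∀ y, HasGradientAt φ (u y) y) : IsStronglyMonotone 0 u := by
  intro y z
  have hderiv (s : ℝ) : HasDerivAt (φ ∘ AffineMap.lineMap z y)
      ⟪u (AffineMap.lineMap z y s), y - z⟫ s :=
    (hu _).hasFDerivAt.comp_hasDerivAt s AffineMap.hasDerivAt_lineMap
  have hmono := (hφ.comp_affineMap (AffineMap.lineMap z y)).monotoneOn_deriv
    (fun s _ => (hderiv s).differentiableAt) (mem_univ 0) (mem_univ 1) zero_le_one
  rw [(hderiv 0).deriv, (hderiv 1).deriv, AffineMap.lineMap_apply_zero,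
    AffineMap.lineMap_apply_one] at hmono
  rw [zero_mul, inner_sub_left]
  exact sub_nonneg.2 hmono

theorem isStronglyMonotone_of_strongConvexOn (hφ : StrongConvexOn univ μ φ)
    (hu : ∀ y, HasGradientAt φ (u y) y) : IsStronglyMonotone μ u := by
  have hu' (y : E) : HasGradientAt (fun y => φ y - μ / 2 * ‖y‖ ^ 2) (u y - μ • y) y := by
    refine ((hu y).hasFDerivAt.sub
      ((hasStrictFDerivAt_norm_sq y).hasFDerivAt.const_mul (μ / 2))).congr_fderiv ?_
    ext w
    simp
    ring
  intro y z
  have h := isStronglyMonotone_zero_of_convexOn (strongConvexOn_iff_convex.1 hφ) hu' y z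
  rw [sub_sub_sub_comm, ← smul_sub, inner_sub_left, real_inner_smul_left,
    real_inner_self_eq_norm_sq] at h
  linarith

theorem isSelfAdjoint_of_hasFDerivAt_gradient (hu : ∀ y, HasGradientAt φ (u y) y) {y : E}
    {G : E →L[ℝ] E} (hG : HasFDerivAt u G y) : IsSelfAdjoint G := by
  rw [ContinuousLinearMap.isSelfAdjoint_iff_isSymmetric]
  intro v w
  have hsecond := (InnerProductSpace.toDual ℝ E).toContinuousLinearEquiv.hasFDerivAt.comp y hG
  have h := second_derivative_symmetric (fun z => (hu z).hasFDerivAt) hsecond v w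
  exact h.trans (real_inner_comm _ _)

end StrongMonotonicity

theorem continuous_of_antilipschitzWith {P Y Z : Type*} [TopologicalSpace P]
    [PseudoMetricSpace Y] [PseudoMetricSpace Z] {K : ℝ≥0} {Φ : P → Y → Z} {v : P → Y} {b : P → Z}
    (hΦ : ∀ p, AntilipschitzWith K (Φ p)) (hΦc : ∀ y, Continuous fun p => Φ p y)
    (hb : Continuous b) (hv : ∀ p, Φ p (v p) = b p) : Continuous v := by
  refine continuous_iff_continuousAt.2 fun q => tendsto_iff_dist_tendsto_zero.2 ?_
  have hbound (p : P) : dist (v p) (v q) ≤ K * dist (b p) (Φ p (v q)) :=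
    hv p ▸ (hΦ p).le_mul_dist (v p) (v q)
  have hlim : Filter.Tendsto (fun p => K * dist (b p) (Φ p (v q))) (nhds q) (nhds 0) := by
    have hcont : Continuous fun p => K * dist (b p) (Φ p (v q)) :=
      continuous_const.mul (hb.dist (hΦc (v q)))
    simpa [hv] using hcont.tendsto q
  exact squeeze_zero (fun _ => dist_nonneg) hbound hlim

section SafeGradientFlow

variable {H : Type*} [NormedAddCommGroup H] [InnerProductSpace ℝ H] [CompleteSpace H]

/-- The multiplier of the safe gradient flow for `min φ` subject to `ψ ≤ δ`. At critical points of
`ψ` the convention `0 / 0 = 0` gives the value `0` prescribed there. -/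
def safeMultiplier (φ ψ : H → ℝ) (α δ : ℝ) (p : H) : ℝ :=
  max (-⟪gradient ψ p, gradient φ p⟫ + α * (ψ p - δ)) 0 / ‖gradient ψ p‖ ^ 2

/-- The right-hand side `-∇φ - λ ∇ψ` of the safe gradient flow for `min φ` subject to `ψ ≤ δ`. -/
def safeField (φ ψ : H → ℝ) (α δ : ℝ) (p : H) : H :=
  -gradient φ p - safeMultiplier φ ψ α δ p • gradient ψ p

/-- `z` solves the safe gradient flow for `min φ` subject to `ψ ≤ δ` on `[0, ∞)`. -/
def IsSafeGradientFlow (φ ψ : H → ℝ) (α δ : ℝ) (z : ℝ → H) : Prop :=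
  ∀ t, 0 ≤ t → HasDerivAt z (safeField φ ψ α δ (z t)) t

variable {φ ψ : H → ℝ} {α δ : ℝ}

theorem safeMultiplier_nonneg (p : H) : 0 ≤ safeMultiplier φ ψ α δ p := by
  unfold safeMultiplier
  positivity

theorem safeMultiplier_mul_sq_norm_gradient {p : H} (hp : gradient ψ p ≠ 0) :
    safeMultiplier φ ψ α δ p * ‖gradient ψ p‖ ^ 2 =
      max (-⟪gradient ψ p, gradient φ p⟫ + α * (ψ p - δ)) 0 :=
  div_mul_cancel₀ _ (by positivity)

theorem inner_gradient_safeField (p : H) :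
    ⟪gradient ψ p, safeField φ ψ α δ p⟫ =
      -⟪gradient ψ p, gradient φ p⟫ - safeMultiplier φ ψ α δ p * ‖gradient ψ p‖ ^ 2 := by
  rw [safeField, inner_sub_right, inner_neg_right, real_inner_smul_right,
    real_inner_self_eq_norm_sq]

theorem inner_gradient_constraint_safeField_le (hα : 0 ≤ α) {p : H}
    (hp : gradient ψ p = 0 → ψ p ≤ δ) :
    ⟪gradient ψ p, safeField φ ψ α δ p⟫ ≤ -(α * (ψ p - δ)) := by
  by_cases hcrit : gradient ψ p = 0
  · rw [hcrit, inner_zero_left]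
    exact neg_nonneg.2 (mul_nonpos_of_nonneg_of_nonpos hα (sub_nonpos.2 (hp hcrit)))
  · rw [inner_gradient_safeField, safeMultiplier_mul_sq_norm_gradient hcrit]
    linarith [le_max_left (-⟪gradient ψ p, gradient φ p⟫ + α * (ψ p - δ)) 0]

theorem safeMultiplier_mul_inner_gradient_safeField_nonneg (hα : 0 ≤ α) {p : H} (hp : ψ p ≤ δ) :
    0 ≤ safeMultiplier φ ψ α δ p * ⟪gradient ψ p, safeField φ ψ α δ p⟫ := by
  rcases (safeMultiplier_nonneg (φ := φ) (ψ := ψ) (α := α) (δ := δ) p).eq_or_lt with h | hpos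
  · rw [← h, zero_mul]
  have hcrit : gradient ψ p ≠ 0 := fun h => by simp [safeMultiplier, h] at hpos
  have hactive := safeMultiplier_mul_sq_norm_gradient (φ := φ) (α := α) (δ := δ) hcrit
  have hmax : 0 < max (-⟪gradient ψ p, gradient φ p⟫ + α * (ψ p - δ)) 0 :=
    hactive ▸ mul_pos hpos (by positivity)
  rw [max_eq_left (lt_max_iff.1 hmax |>.resolve_right (lt_irrefl _)).le] at hactive
  refine mul_nonneg hpos.le ?_
  rw [inner_gradient_safeField, hactive]
  linarith [mul_nonneg hα (sub_nonneg.2 hp)]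

theorem inner_gradient_objective_safeField_le (hα : 0 ≤ α) {p : H} (hp : ψ p ≤ δ) :
    ⟪gradient φ p, safeField φ ψ α δ p⟫ ≤ -‖safeField φ ψ α δ p‖ ^ 2 := by
  have hgrad : gradient φ p =
      -safeField φ ψ α δ p - safeMultiplier φ ψ α δ p • gradient ψ p := by
    rw [safeField]
    abel
  nth_rewrite 1 [hgrad]
  rw [inner_sub_left, inner_neg_left, real_inner_smul_left, real_inner_self_eq_norm_sq]
  linarith [safeMultiplier_mul_inner_gradient_safeField_nonneg (φ := φ) hα hp]

namespace IsSafeGradientFlow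

variable {z : ℝ → H}

theorem continuousOn (hz : IsSafeGradientFlow φ ψ α δ z) (t : ℝ) : ContinuousOn z (Icc 0 t) :=
  fun s hs => (hz s hs.1).continuousAt.continuousWithinAt

theorem intervalIntegrable_sq_norm (hz : IsSafeGradientFlow φ ψ α δ z) {t : ℝ} (ht : 0 ≤ t)
    {F : Type*} [NormedAddCommGroup F] {w : H → F} (hw : Continuous w) :
    IntervalIntegrable (fun s => ‖w (z s)‖ ^ 2) volume 0 t :=
  ((hw.comp_continuousOn (hz.continuousOn t)).norm.pow 2).intervalIntegrable_of_Icc ht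

theorem hasDerivAt_comp (hz : IsSafeGradientFlow φ ψ α δ z) {χ : H → ℝ} (hχ : Differentiable ℝ χ)
    {t : ℝ} (ht : 0 ≤ t) :
    HasDerivAt (fun s => χ (z s)) ⟪gradient χ (z t), safeField φ ψ α δ (z t)⟫ t :=
  (hχ (z t)).hasGradientAt.hasFDerivAt.comp_hasDerivAt t (hz t ht)

theorem constraint_le (hz : IsSafeGradientFlow φ ψ α δ z) (hψ : Differentiable ℝ ψ) (hα : 0 ≤ α)
    (hcrit : ∀ p, gradient ψ p = 0 → ψ p ≤ δ) (h0 : ψ (z 0) ≤ δ) {t : ℝ} (ht : 0 ≤ t) :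
    ψ (z t) ≤ δ := by
  have hderiv (s : ℝ) (hs : 0 ≤ s) := (hz.hasDerivAt_comp hψ hs).sub_const δ
  have h := le_gronwallBound_of_liminf_deriv_right_le (δ := 0) (K := -α) (ε := 0) (b := t)
    (fun s hs => (hderiv s hs.1).continuousAt.continuousWithinAt)
    (fun s hs _ hr => (hderiv s hs.1).hasDerivWithinAt.liminf_right_slope_le hr)
    (sub_nonpos.2 h0)
    (fun s _ => by
      linarith [inner_gradient_constraint_safeField_le (φ := φ) hα (hcrit (z s))])
    t (right_mem_Icc.2 ht)
  rw [gronwallBound_ε0_δ0] at h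
  exact sub_nonpos.1 h

theorem objective_add_integral_le (hz : IsSafeGradientFlow φ ψ α δ z) (hφ : Differentiable ℝ φ)
    (hα : 0 ≤ α) (hfeas : ∀ s, 0 ≤ s → ψ (z s) ≤ δ) {t : ℝ} (ht : 0 ≤ t) {w : H → ℝ}
    (hw : Continuous w) (hle : ∀ p, w p ≤ ‖safeField φ ψ α δ p‖ ^ 2) :
    φ (z t) + ∫ s in (0 : ℝ)..t, w (z s) ≤ φ (z 0) := by
  have h := intervalIntegral.sub_le_integral_of_hasDeriv_right_of_le ht
    (fun s hs => (hz.hasDerivAt_comp hφ hs.1).continuousAt.continuousWithinAt)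
    (fun s hs => (hz.hasDerivAt_comp hφ hs.1.le).hasDerivWithinAt)
    (φ := fun s => -w (z s)) (hw.comp_continuousOn (hz.continuousOn t)).neg.integrableOn_Icc
    (fun s hs => (inner_gradient_objective_safeField_le hα (hfeas s hs.1.le)).trans
      (neg_le_neg (hle _)))
  rw [intervalIntegral.integral_neg] at h
  linarith

end IsSafeGradientFlow

end SafeGradientFlow

section PartialDerivatives

variable {X Y Z : Type*} [NormedAddCommGroup X] [NormedSpace ℝ X] [NormedAddCommGroup Y]
  [NormedSpace ℝ Y] [NormedAddCommGroup Z] [NormedSpace ℝ Z] {Φ : X → Y → Z} {k : WithTop ℕ∞}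

theorem fderiv_left_eq_comp_inl {p : X × Y} (hΦ : DifferentiableAt ℝ (Function.uncurry Φ) p) :
    fderiv ℝ (fun x => Φ x p.2) p.1 =
      fderiv ℝ (Function.uncurry Φ) p ∘L ContinuousLinearMap.inl ℝ X Y := by
  have hincl : HasFDerivAt (fun x => (x, p.2)) (ContinuousLinearMap.inl ℝ X Y) p.1 :=
    hasFDerivAt_prodMk_left p.1 p.2
  exact (HasFDerivAt.comp (g := Function.uncurry Φ) p.1 hΦ.hasFDerivAt hincl).fderiv

theorem fderiv_right_eq_comp_inr {p : X × Y} (hΦ : DifferentiableAt ℝ (Function.uncurry Φ) p) :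
    fderiv ℝ (Φ p.1) p.2 =
      fderiv ℝ (Function.uncurry Φ) p ∘L ContinuousLinearMap.inr ℝ X Y := by
  have hincl : HasFDerivAt (fun y => (p.1, y)) (ContinuousLinearMap.inr ℝ X Y) p.2 :=
    hasFDerivAt_prodMk_right p.1 p.2
  exact (HasFDerivAt.comp (g := Function.uncurry Φ) p.2 hΦ.hasFDerivAt hincl).fderiv

theorem contDiff_fderiv_left (hΦ : ContDiff ℝ (k + 1) (Function.uncurry Φ)) :
    ContDiff ℝ k fun p : X × Y => fderiv ℝ (fun x => Φ x p.2) p.1 := by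
  simp only [fderiv_left_eq_comp_inl (hΦ.differentiable (by simp) _)]
  exact (hΦ.fderiv_right le_rfl).clm_comp contDiff_const

theorem contDiff_fderiv_right (hΦ : ContDiff ℝ (k + 1) (Function.uncurry Φ)) :
    ContDiff ℝ k fun p : X × Y => fderiv ℝ (Φ p.1) p.2 := by
  simp only [fderiv_right_eq_comp_inr (hΦ.differentiable (by simp) _)]
  exact (hΦ.fderiv_right le_rfl).clm_comp contDiff_const

end PartialDerivatives

theorem sq_norm_add_apply_le {X Y : Type*} [SeminormedAddCommGroup X] [NormedSpace ℝ X]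
    [SeminormedAddCommGroup Y] [NormedSpace ℝ Y] {A : Y →L[ℝ] X} {μ L : ℝ} (hμ : 0 ≤ μ) (hL : 0 ≤ L)
    (hA : ‖A‖ ≤ L) (a : X) {b w : Y} (hw : μ * ‖w‖ ≤ ‖b‖) :
    μ ^ 2 / (μ ^ 2 + L ^ 2) * ‖a + A w‖ ^ 2 ≤ ‖a‖ ^ 2 + ‖b‖ ^ 2 := by
  have hlin : μ * ‖a + A w‖ ≤ μ * ‖a‖ + L * ‖b‖ :=
    calc μ * ‖a + A w‖ ≤ μ * (‖a‖ + L * ‖w‖) := by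
          gcongr
          exact norm_add_le_of_le le_rfl (A.le_of_opNorm_le hA w)
      _ = μ * ‖a‖ + L * (μ * ‖w‖) := by ring
      _ ≤ μ * ‖a‖ + L * ‖b‖ := by gcongr
  have hcauchy : (μ * ‖a + A w‖) ^ 2 ≤ (‖a‖ ^ 2 + ‖b‖ ^ 2) * (μ ^ 2 + L ^ 2) :=
    calc (μ * ‖a + A w‖) ^ 2 ≤ (μ * ‖a‖ + L * ‖b‖) ^ 2 := by gcongr
      _ ≤ (‖a‖ ^ 2 + ‖b‖ ^ 2) * (μ ^ 2 + L ^ 2) := by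
        linarith [sq_nonneg (μ * ‖b‖ - L * ‖a‖)]
  rw [div_mul_eq_mul_div, ← mul_pow]
  exact div_le_of_le_mul₀ (by positivity) (by positivity) hcauchy

section ProductGradient

variable {X Y : Type*} [NormedAddCommGroup X] [InnerProductSpace ℝ X]
  [NormedAddCommGroup Y] [InnerProductSpace ℝ Y]

/-- The partial gradient `∇_x f` on real Hilbert spaces. -/
def gradFst [CompleteSpace X] (f : X → Y → ℝ) (x : X) (y : Y) : X :=
  gradient (fun x' => f x' y) x

/-- The partial gradient `∇_y f` on real Hilbert spaces. -/
def gradSnd [CompleteSpace Y] (f : X → Y → ℝ) (x : X) (y : Y) : Y :=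
  gradient (f x) y

/-- `f` as a function on the Hilbert space `X × Y`, which in Mathlib is the type synonym
`WithLp 2 (X × Y)` since `X × Y` itself carries the sup norm. -/
def uncurryL2 (f : X → Y → ℝ) (p : WithLp 2 (X × Y)) : ℝ :=
  f p.fst p.snd

variable {f : X → Y → ℝ} {k : WithTop ℕ∞}

theorem contDiff_gradFst [CompleteSpace X] (hf : ContDiff ℝ (k + 1) (Function.uncurry f)) :
    ContDiff ℝ k fun p : X × Y => gradFst f p.1 p.2 :=
  (InnerProductSpace.toDual ℝ X).symm.contDiff.comp (contDiff_fderiv_left hf)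

theorem contDiff_gradSnd [CompleteSpace Y] (hf : ContDiff ℝ (k + 1) (Function.uncurry f)) :
    ContDiff ℝ k fun p : X × Y => gradSnd f p.1 p.2 :=
  (InnerProductSpace.toDual ℝ Y).symm.contDiff.comp (contDiff_fderiv_right hf)

theorem hasGradientAt_gradSnd [CompleteSpace Y] (hf : Differentiable ℝ (Function.uncurry f))
    (x : X) (y : Y) : HasGradientAt (f x) (gradSnd f x y) y :=
  ((hf (x, y)).comp y (hasFDerivAt_prodMk_right x y).differentiableAt).hasGradientAt

theorem differentiable_uncurryL2 (hf : Differentiable ℝ (Function.uncurry f)) :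
    Differentiable ℝ (uncurryL2 f) :=
  hf.comp (WithLp.prodContinuousLinearEquiv 2 ℝ X Y).differentiable

theorem gradient_uncurryL2 [CompleteSpace X] [CompleteSpace Y]
    (hf : Differentiable ℝ (Function.uncurry f)) (p : WithLp 2 (X × Y)) :
    gradient (uncurryL2 f) p = WithLp.toLp 2 (gradFst f p.fst p.snd, gradSnd f p.fst p.snd) := by
  have hderiv := HasFDerivAt.comp (g := Function.uncurry f) p (hf p.ofLp).hasFDerivAt
    (WithLp.prodContinuousLinearEquiv 2 ℝ X Y).hasFDerivAt
  refine HasGradientAt.gradient (hderiv.congr_fderiv ?_)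
  ext w
  have hfst : ⟪gradFst f p.fst p.snd, w.fst⟫ =
      fderiv ℝ (Function.uncurry f) p.ofLp (w.fst, 0) := by
    rw [gradFst, inner_gradient_left, fderiv_left_eq_comp_inl (p := (p.fst, p.snd)) (hf _)]
    rfl
  have hsnd : ⟪gradSnd f p.fst p.snd, w.snd⟫ =
      fderiv ℝ (Function.uncurry f) p.ofLp (0, w.snd) := by
    rw [gradSnd, inner_gradient_left, fderiv_right_eq_comp_inr (p := (p.fst, p.snd)) (hf _)]
    rfl
  rw [InnerProductSpace.toDual_apply_apply, WithLp.prod_inner_apply]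
  change _ = ⟪gradFst f p.fst p.snd, w.fst⟫ + ⟪gradSnd f p.fst p.snd, w.snd⟫
  rw [hfst, hsnd, ← map_add, Prod.mk_add_mk, add_zero, zero_add]
  rfl

theorem gradient_norm_sq_eq_two_smul_adjoint [CompleteSpace X] [CompleteSpace Y]
    {U : X → Y} {x : X} (hU : DifferentiableAt ℝ U x) :
    gradient (fun x => ‖U x‖ ^ 2) x =
      (2 : ℝ) • ContinuousLinearMap.adjoint (fderiv ℝ U x) (U x) := by
  refine HasGradientAt.gradient (hU.hasFDerivAt.norm_sq.congr_fderiv ?_)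
  ext w
  simp [ContinuousLinearMap.adjoint_inner_left]

end ProductGradient

section LowerLevel

variable {X Y : Type*} [NormedAddCommGroup X] [InnerProductSpace ℝ X]
  [NormedAddCommGroup Y] [InnerProductSpace ℝ Y] [CompleteSpace Y]

/-- The mixed Hessian block `∇²_{yx} g`, as a linear map from the `x`-space to the `y`-space. -/
def mixedHessian (g : X → Y → ℝ) (x : X) (y : Y) : X →L[ℝ] Y :=
  fderiv ℝ (fun x' => gradSnd g x' y) x

/-- The Hessian block `∇²_{yy} g`. -/
def lowerHessian (g : X → Y → ℝ) (x : X) (y : Y) : Y →L[ℝ] Y :=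
  fderiv ℝ (gradSnd g x) y

/-- The constraint function `h = ‖∇_y g‖²`, which measures lower-level stationarity. -/
def lowerResidual (g : X → Y → ℝ) (x : X) (y : Y) : ℝ :=
  ‖gradSnd g x y‖ ^ 2

/-- The surrogate hypergradient `F = ∇_x f - (∇²_{yx} g)ᵀ v`. -/
def surrogateGradient [CompleteSpace X] (f g : X → Y → ℝ) (v : X → Y → Y) (x : X) (y : Y) : X :=
  gradFst f x y - ContinuousLinearMap.adjoint (mixedHessian g x y) (v x y)

variable {f g : X → Y → ℝ} {v : X → Y → Y} {ystar : X → Y} {μ : ℝ}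

theorem contDiff_one_gradSnd (hg : ContDiff ℝ 2 (Function.uncurry g)) :
    ContDiff ℝ 1 (Function.uncurry (gradSnd g)) :=
  contDiff_gradSnd (by rwa [one_add_one_eq_two])

theorem continuous_mixedHessian (hg : ContDiff ℝ 2 (Function.uncurry g)) :
    Continuous fun p : X × Y => mixedHessian g p.1 p.2 :=
  (contDiff_fderiv_left (k := 0) (by simpa using contDiff_one_gradSnd hg)).continuous

theorem continuous_lowerHessian (hg : ContDiff ℝ 2 (Function.uncurry g)) :
    Continuous fun p : X × Y => lowerHessian g p.1 p.2 :=
  (contDiff_fderiv_right (k := 0) (by simpa using contDiff_one_gradSnd hg)).continuous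

theorem differentiable_gradSnd_left (hg : ContDiff ℝ 2 (Function.uncurry g)) (y : Y) :
    Differentiable ℝ fun x => gradSnd g x y :=
  ((contDiff_one_gradSnd hg).comp (contDiff_prodMk_left y)).differentiable one_ne_zero

theorem differentiable_gradSnd_right (hg : ContDiff ℝ 2 (Function.uncurry g)) (x : X) :
    Differentiable ℝ (gradSnd g x) :=
  ((contDiff_one_gradSnd hg).comp (contDiff_prodMk_right x)).differentiable one_ne_zero

theorem differentiable_lowerResidual (hg : ContDiff ℝ 2 (Function.uncurry g)) :
    Differentiable ℝ (Function.uncurry (lowerResidual g)) :=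
  ((contDiff_one_gradSnd hg).norm_sq ℝ).differentiable one_ne_zero

theorem isStronglyMonotone_gradSnd (hg : Differentiable ℝ (Function.uncurry g)) {x : X}
    (hsc : StrongConvexOn univ μ (g x)) : IsStronglyMonotone μ (gradSnd g x) :=
  isStronglyMonotone_of_strongConvexOn hsc (hasGradientAt_gradSnd hg x)

theorem isStronglyMonotone_lowerHessian (hg : ContDiff ℝ 2 (Function.uncurry g)) {x : X}
    (hsc : StrongConvexOn univ μ (g x)) (y : Y) : IsStronglyMonotone μ (lowerHessian g x y) :=
  (isStronglyMonotone_gradSnd (hg.differentiable two_ne_zero) hsc).of_hasFDerivAt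
    (differentiable_gradSnd_right hg x y).hasFDerivAt

theorem isSelfAdjoint_lowerHessian (hg : ContDiff ℝ 2 (Function.uncurry g)) (x : X) (y : Y) :
    IsSelfAdjoint (lowerHessian g x y) :=
  isSelfAdjoint_of_hasFDerivAt_gradient (hasGradientAt_gradSnd (hg.differentiable two_ne_zero) x)
    (differentiable_gradSnd_right hg x y).hasFDerivAt

theorem gradSnd_lowerResidual (hg : ContDiff ℝ 2 (Function.uncurry g)) (x : X) (y : Y) :
    gradSnd (lowerResidual g) x y = (2 : ℝ) • lowerHessian g x y (gradSnd g x y) := by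
  have h := gradient_norm_sq_eq_two_smul_adjoint (differentiable_gradSnd_right hg x y)
  have hadj : ContinuousLinearMap.adjoint (fderiv ℝ (gradSnd g x) y) = lowerHessian g x y :=
    (isSelfAdjoint_lowerHessian hg x y).adjoint_eq
  rwa [hadj] at h

theorem lowerResidual_eq_zero_of_gradSnd_eq_zero (hg : ContDiff ℝ 2 (Function.uncurry g))
    (hμ : 0 < μ) {x : X} (hsc : StrongConvexOn univ μ (g x)) {y : Y}
    (hcrit : gradSnd (lowerResidual g) x y = 0) : lowerResidual g x y = 0 := by
  have hker : lowerHessian g x y (gradSnd g x y) = lowerHessian g x y 0 := by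
    rw [map_zero]
    exact (smul_eq_zero_iff_right two_ne_zero).1 (gradSnd_lowerResidual hg x y ▸ hcrit)
  have hinj := ((isStronglyMonotone_lowerHessian hg hsc y).antilipschitzWith hμ).injective
  rw [lowerResidual, hinj hker, norm_zero, zero_pow two_ne_zero]

theorem gradSnd_eq_zero_of_isMinOn (hg : Differentiable ℝ (Function.uncurry g)) {x : X} {y : Y}
    (hy : IsMinOn (g x) univ y) : gradSnd g x y = 0 := by
  simpa using (hy.isLocalMin Filter.univ_mem).hasFDerivAt_eq_zero
    (hasGradientAt_gradSnd hg x y).hasFDerivAt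

theorem norm_sub_minimizer_le (hg : Differentiable ℝ (Function.uncurry g)) (hμ : 0 < μ) {x : X}
    (hsc : StrongConvexOn univ μ (g x)) {y₀ : Y} (hy₀ : IsMinOn (g x) univ y₀) {y : Y} {ε : ℝ}
    (hε : 0 ≤ ε) (hy : lowerResidual g x y ≤ ε ^ 2) : ‖y - y₀‖ ≤ ε / μ := by
  rw [le_div_iff₀' hμ]
  calc μ * ‖y - y₀‖ ≤ ‖gradSnd g x y - gradSnd g x y₀‖ :=
        (isStronglyMonotone_gradSnd hg hsc).mul_norm_sub_le y y₀
    _ = ‖gradSnd g x y‖ := by rw [gradSnd_eq_zero_of_isMinOn hg hy₀, sub_zero]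
    _ ≤ ε := le_of_sq_le_sq hy hε

theorem continuous_minimizer (hg : ContDiff ℝ 2 (Function.uncurry g)) (hμ : 0 < μ)
    (hsc : ∀ x, StrongConvexOn univ μ (g x)) (hystar : ∀ x, IsMinOn (g x) univ (ystar x)) :
    Continuous ystar :=
  continuous_of_antilipschitzWith
    (fun x => (isStronglyMonotone_gradSnd (hg.differentiable two_ne_zero) (hsc x)).antilipschitzWith
      hμ)
    (fun y => (differentiable_gradSnd_left hg y).continuous) continuous_const
    (fun x => gradSnd_eq_zero_of_isMinOn (hg.differentiable two_ne_zero) (hystar x))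

theorem continuous_lowerHessian_solution (hf : ContDiff ℝ 1 (Function.uncurry f))
    (hg : ContDiff ℝ 2 (Function.uncurry g)) (hμ : 0 < μ)
    (hsc : ∀ x, StrongConvexOn univ μ (g x))
    (hv : ∀ x y, lowerHessian g x y (v x y) = gradSnd f x y) :
    Continuous fun p : X × Y => v p.1 p.2 :=
  continuous_of_antilipschitzWith
    (fun p => (isStronglyMonotone_lowerHessian hg (hsc p.1) p.2).antilipschitzWith hμ)
    (fun _ => (continuous_lowerHessian hg).clm_apply continuous_const)
    (contDiff_gradSnd (k := 0) (by simpa using hf)).continuous (fun p => hv p.1 p.2)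

variable [CompleteSpace X]

theorem gradFst_lowerResidual (hg : ContDiff ℝ 2 (Function.uncurry g)) (x : X) (y : Y) :
    gradFst (lowerResidual g) x y =
      (2 : ℝ) • ContinuousLinearMap.adjoint (mixedHessian g x y) (gradSnd g x y) :=
  gradient_norm_sq_eq_two_smul_adjoint (differentiable_gradSnd_left hg y x)

theorem continuous_surrogateGradient (hf : ContDiff ℝ 1 (Function.uncurry f))
    (hg : ContDiff ℝ 2 (Function.uncurry g)) (hμ : 0 < μ)
    (hsc : ∀ x, StrongConvexOn univ μ (g x))
    (hv : ∀ x y, lowerHessian g x y (v x y) = gradSnd f x y) :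
    Continuous fun p : X × Y => surrogateGradient f g v p.1 p.2 := by
  have hadjoint : Continuous fun p : X × Y =>
      ContinuousLinearMap.adjoint (mixedHessian g p.1 p.2) :=
    ContinuousLinearMap.adjoint.continuous.comp (continuous_mixedHessian hg)
  exact (contDiff_gradFst (k := 0) (by simpa using hf)).continuous.sub
    (hadjoint.clm_apply (continuous_lowerHessian_solution hf hg hμ hsc hv))

theorem norm_adjoint_mixedHessian_le {L : ℝ≥0} {x : X} {y : Y}
    (hL : LipschitzWith L fun x => gradSnd g x y) :
    ‖ContinuousLinearMap.adjoint (mixedHessian g x y)‖ ≤ L := by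
  rw [LinearIsometryEquiv.norm_map]
  exact norm_fderiv_le_of_lipschitz ℝ hL

end LowerLevel

section BilevelFlow

variable {X Y : Type*} [NormedAddCommGroup X] [InnerProductSpace ℝ X] [CompleteSpace X]
  [NormedAddCommGroup Y] [InnerProductSpace ℝ Y] [CompleteSpace Y] {f g : X → Y → ℝ}
  {v : X → Y → Y} {ystar : X → Y} {μ α δ ε M : ℝ} {L : ℝ≥0} {z : ℝ → WithLp 2 (X × Y)}

theorem lowerResidual_eq_zero_of_gradient_eq_zero (hg : ContDiff ℝ 2 (Function.uncurry g))
    (hμ : 0 < μ) (hsc : ∀ x, StrongConvexOn univ μ (g x)) {p : WithLp 2 (X × Y)}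
    (hp : gradient (uncurryL2 (lowerResidual g)) p = 0) :
    lowerResidual g p.fst p.snd = 0 := by
  rw [gradient_uncurryL2 (differentiable_lowerResidual hg)] at hp
  exact lowerResidual_eq_zero_of_gradSnd_eq_zero hg hμ (hsc _) (congrArg WithLp.snd hp)

-- With `w = v + 2 λ ∇_y g`, the components `(V₁, V₂)` of the field satisfy `∇²_{yy} g w = -V₂` and
-- `-F = V₁ + (∇²_{yx} g)ᵀ w`, so `F` is controlled by the field alone.
theorem sq_norm_surrogateGradient_le (hf : Differentiable ℝ (Function.uncurry f))
    (hg : ContDiff ℝ 2 (Function.uncurry g)) (hμ : 0 < μ)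
    (hsc : ∀ x, StrongConvexOn univ μ (g x)) (hL : ∀ y, LipschitzWith L fun x => gradSnd g x y)
    (hv : ∀ x y, lowerHessian g x y (v x y) = gradSnd f x y) (p : WithLp 2 (X × Y)) :
    μ ^ 2 / (μ ^ 2 + (L : ℝ) ^ 2) * ‖surrogateGradient f g v p.fst p.snd‖ ^ 2 ≤
      ‖safeField (uncurryL2 f) (uncurryL2 (lowerResidual g)) α δ p‖ ^ 2 := by
  set V := safeField (uncurryL2 f) (uncurryL2 (lowerResidual g)) α δ p with hV
  set r := safeMultiplier (uncurryL2 f) (uncurryL2 (lowerResidual g)) α δ p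
  set w := v p.fst p.snd + (2 * r) • gradSnd g p.fst p.snd
  rw [safeField, gradient_uncurryL2 hf, gradient_uncurryL2 (differentiable_lowerResidual hg)] at hV
  have hfst : V.fst = -gradFst f p.fst p.snd - r • gradFst (lowerResidual g) p.fst p.snd :=
    congrArg WithLp.fst hV
  have hsnd : V.snd = -gradSnd f p.fst p.snd - r • gradSnd (lowerResidual g) p.fst p.snd :=
    congrArg WithLp.snd hV
  have hHw : lowerHessian g p.fst p.snd w = -V.snd := by
    rw [hsnd, gradSnd_lowerResidual hg, map_add, map_smul, hv]
    module
  have hF : surrogateGradient f g v p.fst p.snd =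
      -(V.fst + ContinuousLinearMap.adjoint (mixedHessian g p.fst p.snd) w) := by
    rw [surrogateGradient, hfst, gradFst_lowerResidual hg, map_add, map_smul]
    module
  have hw : μ * ‖w‖ ≤ ‖V.snd‖ := by
    have h := (isStronglyMonotone_lowerHessian hg (hsc p.fst) p.snd).mul_norm_sub_le w 0
    rwa [map_zero, sub_zero, sub_zero, hHw, norm_neg] at h
  rw [hF, norm_neg, WithLp.prod_norm_sq_eq_of_L2]
  exact sq_norm_add_apply_le hμ.le L.coe_nonneg (norm_adjoint_mixedHessian_le (hL p.snd)) V.fst hw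

theorem IsSafeGradientFlow.lowerResidual_le
    (hz : IsSafeGradientFlow (uncurryL2 f) (uncurryL2 (lowerResidual g)) α (ε ^ 2) z)
    (hg : ContDiff ℝ 2 (Function.uncurry g)) (hμ : 0 < μ)
    (hsc : ∀ x, StrongConvexOn univ μ (g x)) (hα : 0 ≤ α)
    (h0 : lowerResidual g (z 0).fst (z 0).snd ≤ ε ^ 2) {t : ℝ} (ht : 0 ≤ t) :
    lowerResidual g (z t).fst (z t).snd ≤ ε ^ 2 :=
  hz.constraint_le (differentiable_uncurryL2 (differentiable_lowerResidual hg)) hα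
    (fun _ hp => (lowerResidual_eq_zero_of_gradient_eq_zero hg hμ hsc hp).trans_le (sq_nonneg ε))
    h0 ht

theorem IsSafeGradientFlow.objective_add_integral_surrogateGradient_le
    (hz : IsSafeGradientFlow (uncurryL2 f) (uncurryL2 (lowerResidual g)) α (ε ^ 2) z)
    (hf : ContDiff ℝ 1 (Function.uncurry f))
    (hg : ContDiff ℝ 2 (Function.uncurry g)) (hμ : 0 < μ)
    (hsc : ∀ x, StrongConvexOn univ μ (g x)) (hL : ∀ y, LipschitzWith L fun x => gradSnd g x y)
    (hv : ∀ x y, lowerHessian g x y (v x y) = gradSnd f x y) (hα : 0 ≤ α)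
    (h0 : lowerResidual g (z 0).fst (z 0).snd ≤ ε ^ 2) {t : ℝ} (ht : 0 ≤ t) :
    f (z t).fst (z t).snd + μ ^ 2 / (μ ^ 2 + (L : ℝ) ^ 2) *
        ∫ s in (0 : ℝ)..t, ‖surrogateGradient f g v (z s).fst (z s).snd‖ ^ 2 ≤
      f (z 0).fst (z 0).snd := by
  have hcont : Continuous fun p : WithLp 2 (X × Y) => surrogateGradient f g v p.fst p.snd :=
    (continuous_surrogateGradient hf hg hμ hsc hv).comp (WithLp.prod_continuous_ofLp 2 X Y)
  have hfdiff := hf.differentiable one_ne_zero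
  rw [← intervalIntegral.integral_const_mul]
  exact hz.objective_add_integral_le (differentiable_uncurryL2 hfdiff) hα
    (fun s hs => hz.lowerResidual_le hg hμ hsc hα h0 hs) ht
    (continuous_const.mul (hcont.norm.pow 2))
    (sq_norm_surrogateGradient_le hfdiff hg hμ hsc hL hv)

theorem continuous_gradient_implicitObjective (hf : ContDiff ℝ 1 (Function.uncurry f))
    (hg : ContDiff ℝ 2 (Function.uncurry g)) (hμ : 0 < μ)
    (hsc : ∀ x, StrongConvexOn univ μ (g x)) (hystar : ∀ x, IsMinOn (g x) univ (ystar x))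
    (hv : ∀ x y, lowerHessian g x y (v x y) = gradSnd f x y)
    (hM : ∀ x y, ‖gradient (fun x' => f x' (ystar x')) x - surrogateGradient f g v x y‖ ≤
      M * ‖y - ystar x‖) :
    Continuous (gradient fun x => f x (ystar x)) := by
  have hgrad (x : X) :
      gradient (fun x => f x (ystar x)) x = surrogateGradient f g v x (ystar x) := by
    have h := hM x (ystar x)
    rw [sub_self, norm_zero, mul_zero, norm_le_zero_iff] at h
    exact sub_eq_zero.1 h
  rw [funext hgrad]
  exact (continuous_surrogateGradient hf hg hμ hsc hv).comp
    (continuous_id.prodMk (continuous_minimizer hg hμ hsc hystar))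

theorem sq_norm_gradient_implicitObjective_le (hg : Differentiable ℝ (Function.uncurry g))
    (hμ : 0 < μ) (hsc : ∀ x, StrongConvexOn univ μ (g x))
    (hystar : ∀ x, IsMinOn (g x) univ (ystar x)) (hM0 : 0 ≤ M)
    (hM : ∀ x y, ‖gradient (fun x' => f x' (ystar x')) x - surrogateGradient f g v x y‖ ≤
      M * ‖y - ystar x‖) (hε : 0 ≤ ε) {x : X} {y : Y} (hy : lowerResidual g x y ≤ ε ^ 2) :
    ‖gradient (fun x' => f x' (ystar x')) x‖ ^ 2 ≤
      2 * ‖surrogateGradient f g v x y‖ ^ 2 + 2 * M ^ 2 * ε ^ 2 / μ ^ 2 := by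
  have hdist : ‖gradient (fun x' => f x' (ystar x')) x - surrogateGradient f g v x y‖ ≤
      M * (ε / μ) :=
    (hM x y).trans (by gcongr; exact norm_sub_minimizer_le hg hμ (hsc x) (hystar x) hε hy)
  calc ‖gradient (fun x' => f x' (ystar x')) x‖ ^ 2
      ≤ (‖surrogateGradient f g v x y‖ + M * (ε / μ)) ^ 2 := by
        gcongr
        exact (norm_le_norm_add_norm_sub' _ _).trans (by gcongr)
    _ ≤ 2 * (‖surrogateGradient f g v x y‖ ^ 2 + (M * (ε / μ)) ^ 2) := add_sq_le
    _ = 2 * ‖surrogateGradient f g v x y‖ ^ 2 + 2 * M ^ 2 * ε ^ 2 / μ ^ 2 := by ring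

theorem IsSafeGradientFlow.integral_sq_norm_gradient_implicitObjective_le
    (hz : IsSafeGradientFlow (uncurryL2 f) (uncurryL2 (lowerResidual g)) α (ε ^ 2) z)
    (hf : ContDiff ℝ 1 (Function.uncurry f)) (hg : ContDiff ℝ 2 (Function.uncurry g)) (hμ : 0 < μ)
    (hsc : ∀ x, StrongConvexOn univ μ (g x)) (hystar : ∀ x, IsMinOn (g x) univ (ystar x))
    (hv : ∀ x y, lowerHessian g x y (v x y) = gradSnd f x y) (hM0 : 0 ≤ M)
    (hM : ∀ x y, ‖gradient (fun x' => f x' (ystar x')) x - surrogateGradient f g v x y‖ ≤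
      M * ‖y - ystar x‖) (hα : 0 ≤ α) (hε : 0 ≤ ε)
    (h0 : lowerResidual g (z 0).fst (z 0).snd ≤ ε ^ 2) {t : ℝ} (ht : 0 ≤ t) :
    ∫ s in (0 : ℝ)..t, ‖gradient (fun x => f x (ystar x)) (z s).fst‖ ^ 2 ≤
      2 * (∫ s in (0 : ℝ)..t, ‖surrogateGradient f g v (z s).fst (z s).snd‖ ^ 2) +
        t * (2 * M ^ 2 * ε ^ 2 / μ ^ 2) := by
  have hofLp := WithLp.prod_continuous_ofLp 2 X Y
  have hgradient :
      IntervalIntegrable (fun s => ‖gradient (fun x => f x (ystar x)) (z s).fst‖ ^ 2) volume 0 t :=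
    hz.intervalIntegrable_sq_norm ht <|
      (continuous_gradient_implicitObjective hf hg hμ hsc hystar hv hM).comp
        (continuous_fst.comp hofLp)
  have hsurrogate :
      IntervalIntegrable (fun s => 2 * ‖surrogateGradient f g v (z s).fst (z s).snd‖ ^ 2)
        volume 0 t :=
    (hz.intervalIntegrable_sq_norm ht <|
      (continuous_surrogateGradient hf hg hμ hsc hv).comp hofLp).const_mul 2
  calc ∫ s in (0 : ℝ)..t, ‖gradient (fun x => f x (ystar x)) (z s).fst‖ ^ 2
      ≤ ∫ s in (0 : ℝ)..t, (2 * ‖surrogateGradient f g v (z s).fst (z s).snd‖ ^ 2 +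
          2 * M ^ 2 * ε ^ 2 / μ ^ 2) :=
        intervalIntegral.integral_mono_on ht hgradient
          (hsurrogate.add intervalIntegrable_const)
          fun s hs => sq_norm_gradient_implicitObjective_le (hg.differentiable two_ne_zero) hμ hsc
            hystar hM0 hM hε (hz.lowerResidual_le hg hμ hsc hα h0 hs.1)
    _ = _ := by
        rw [intervalIntegral.integral_add hsurrogate intervalIntegrable_const,
          intervalIntegral.integral_const_mul, intervalIntegral.integral_const, sub_zero,
          smul_eq_mul]

theorem stmt_14_general (hf : ContDiff ℝ 1 (Function.uncurry f))
    (hg : ContDiff ℝ 2 (Function.uncurry g)) (hμ : 0 < μ)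
    (hsc : ∀ x, StrongConvexOn univ μ (g x)) (hL : ∀ y, LipschitzWith L fun x => gradSnd g x y)
    (hystar : ∀ x, IsMinOn (g x) univ (ystar x))
    (hv : ∀ x y, lowerHessian g x y (v x y) = gradSnd f x y) (hM0 : 0 ≤ M)
    (hM : ∀ x y, ‖gradient (fun x' => f x' (ystar x')) x - surrogateGradient f g v x y‖ ≤
      M * ‖y - ystar x‖) (hα : 0 ≤ α) (hε : 0 ≤ ε)
    (hz : IsSafeGradientFlow (uncurryL2 f) (uncurryL2 (lowerResidual g)) α (ε ^ 2) z)
    (h0 : lowerResidual g (z 0).fst (z 0).snd ≤ ε ^ 2) {fstar : ℝ}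
    (hfstar : IsGLB {r | ∃ x y, lowerResidual g x y ≤ ε ^ 2 ∧ f x y = r} fstar) {c : ℝ}
    (hc : c = μ ^ 2 / (μ ^ 2 + (L : ℝ) ^ 2)) {E : ℝ → ℝ}
    (hE : ∀ t, E t = f (z t).fst (z t).snd - fstar +
      c * ∫ s in (0 : ℝ)..t, ‖surrogateGradient f g v (z s).fst (z s).snd‖ ^ 2) :
    (∀ t, 0 ≤ t → E t ≤ E 0) ∧
    ∀ t, 0 < t →
      1 / t * ∫ s in (0 : ℝ)..t, ‖gradient (fun x => f x (ystar x)) (z s).fst‖ ^ 2 ≤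
        2 * M ^ 2 * ε ^ 2 / μ ^ 2 + 2 / (c * t) * (f (z 0).fst (z 0).snd - fstar) := by
  have hE0 : E 0 = f (z 0).fst (z 0).snd - fstar := by
    rw [hE, intervalIntegral.integral_same, mul_zero, add_zero]
  have hdecrease (t : ℝ) (ht : 0 ≤ t) : E t ≤ E 0 := by
    rw [hE0, hE, hc]
    linarith [hz.objective_add_integral_surrogateGradient_le hf hg hμ hsc hL hv hα h0 ht]
  refine ⟨hdecrease, fun t ht => ?_⟩
  have hcpos : 0 < c := hc ▸ by positivity
  have hvalue : fstar ≤ f (z t).fst (z t).snd :=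
    hfstar.1 ⟨_, _, hz.lowerResidual_le hg hμ hsc hα h0 ht.le, rfl⟩
  have hsurrogate : ∫ s in (0 : ℝ)..t, ‖surrogateGradient f g v (z s).fst (z s).snd‖ ^ 2 ≤
      (f (z 0).fst (z 0).snd - fstar) / c := by
    rw [le_div_iff₀' hcpos]
    linarith [hE t, hE0, hdecrease t ht.le]
  have hgrad := hz.integral_sq_norm_gradient_implicitObjective_le hf hg hμ hsc hystar hv hM0 hM hα
    hε h0 ht.le
  calc 1 / t * ∫ s in (0 : ℝ)..t, ‖gradient (fun x => f x (ystar x)) (z s).fst‖ ^ 2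
      ≤ 1 / t * (2 * ((f (z 0).fst (z 0).snd - fstar) / c) +
          t * (2 * M ^ 2 * ε ^ 2 / μ ^ 2)) := by
        gcongr
        exact hgrad.trans (by gcongr)
    _ = 2 * M ^ 2 * ε ^ 2 / μ ^ 2 + 2 / (c * t) * (f (z 0).fst (z 0).snd - fstar) := by
        field_simp
        ring

theorem eq_safeMultiplier_toLp (hf : Differentiable ℝ (Function.uncurry f))
    {ψ : X → Y → ℝ} (hψ : Differentiable ℝ (Function.uncurry ψ)) (x : X) (y : Y) {r : ℝ}
    (hr : ¬(gradFst ψ x y = 0 ∧ gradSnd ψ x y = 0) →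
      r = max (-⟪gradFst ψ x y, gradFst f x y⟫ - ⟪gradSnd ψ x y, gradSnd f x y⟫ +
          α * (ψ x y - δ)) 0 / (‖gradFst ψ x y‖ ^ 2 + ‖gradSnd ψ x y‖ ^ 2))
    (hr0 : gradFst ψ x y = 0 ∧ gradSnd ψ x y = 0 → r = 0) :
    r = safeMultiplier (uncurryL2 f) (uncurryL2 ψ) α δ (WithLp.toLp 2 (x, y)) := by
  rw [safeMultiplier, gradient_uncurryL2 hf, gradient_uncurryL2 hψ, WithLp.prod_inner_apply,
    WithLp.prod_norm_sq_eq_of_L2, neg_add, ← sub_eq_add_neg]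
  by_cases hcrit : gradFst ψ x y = 0 ∧ gradSnd ψ x y = 0
  · simp [hr0 hcrit, hcrit.1, hcrit.2]
  · exact hr hcrit

theorem isSafeGradientFlow_toLp (hf : Differentiable ℝ (Function.uncurry f))
    {ψ : X → Y → ℝ} (hψ : Differentiable ℝ (Function.uncurry ψ)) {x : ℝ → X} {y : ℝ → Y}
    {r : ℝ → ℝ} (hr : ∀ t, 0 ≤ t →
      r t = safeMultiplier (uncurryL2 f) (uncurryL2 ψ) α δ (WithLp.toLp 2 (x t, y t)))
    (hx : ∀ t, 0 ≤ t → HasDerivAt x (-gradFst f (x t) (y t) - r t • gradFst ψ (x t) (y t)) t)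
    (hy : ∀ t, 0 ≤ t → HasDerivAt y (-gradSnd f (x t) (y t) - r t • gradSnd ψ (x t) (y t)) t) :
    IsSafeGradientFlow (uncurryL2 f) (uncurryL2 ψ) α δ fun t => WithLp.toLp 2 (x t, y t) := by
  intro t ht
  rw [safeField, ← hr t ht, gradient_uncurryL2 hf, gradient_uncurryL2 hψ]
  exact (WithLp.prodContinuousLinearEquiv 2 ℝ X Y).symm.hasFDerivAt.comp_hasDerivAt t
    ((hx t ht).prodMk (hy t ht))

end BilevelFlow

/-- Lyapunov decrease and ergodic rate for the relaxed safe gradient flow (RXGF):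
with `c = μ_g²/(μ_g² + (L_{yx}^g)²)` and
`E(t) = f(x(t),y(t)) − f*_ε + c ∫₀ᵗ ‖F(x(τ),y(τ))‖² dτ`, one has `E(t) ≤ E(0)` for `t ≥ 0`, and
`(1/t)∫₀ᵗ ‖∇ℓ(x(τ))‖² dτ ≤ 2M₁²ε²/μ_g² + (2/(ct))(f(x(0),y(0)) − f*_ε)` for `t > 0`. -/
theorem stmt_14 {n m : ℕ} (f g : Vec n → Vec m → ℝ)
    -- Assumption A1
    (hf : ContDiff ℝ 1 (Function.uncurry f))
    (Cxf Cyf : ℝ) (hCxf : 0 < Cxf) (hCyf : 0 < Cyf)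
    (hfxB : ∀ x y, ‖gradx f x y‖ ≤ Cxf)
    (hfyB : ∀ x y, ‖grady f x y‖ ≤ Cyf)
    (Lxf Lyf : ℝ≥0)
    (hfxL : LipschitzWith Lxf fun p : Vec n × Vec m => gradx f p.1 p.2)
    (hfyL : LipschitzWith Lyf fun p : Vec n × Vec m => grady f p.1 p.2)
    -- Assumption A2
    (hg : ContDiff ℝ 2 (Function.uncurry g))
    (μg : ℝ) (hμg : 0 < μg)
    (hsc : ∀ x, StrongConvexOn Set.univ μg (g x))
    (Lyyg Lyxg : ℝ≥0)
    (hgyLy : ∀ x, LipschitzWith Lyyg fun y => grady g x y)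
    (hgyLx : ∀ y, LipschitzWith Lyxg fun x => grady g x y)
    (Gyx : Vec n → Vec m → Vec n →L[ℝ] Vec m)
    (Gyy : Vec n → Vec m → Vec m →L[ℝ] Vec m)
    (hGyx : ∀ x y, HasFDerivAt (fun x' => grady g x' y) (Gyx x y) x)
    (hGyy : ∀ x y, HasFDerivAt (fun y' => grady g x y') (Gyy x y) y)
    (Cyxg Cyyg : ℝ≥0)
    (hGyxL : LipschitzWith Cyxg fun p : Vec n × Vec m => Gyx p.1 p.2)
    (hGyyL : LipschitzWith Cyyg fun p : Vec n × Vec m => Gyy p.1 p.2)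
    -- lower-level solution map, surrogate direction `v`, and the constant `M₁`
    (ystar : Vec n → Vec m)
    (hystar : ∀ x', IsMinOn (g x') Set.univ (ystar x'))
    (v : Vec n → Vec m → Vec m)
    (hv : ∀ x' y', Gyy x' y' (v x' y') = grady f x' y')
    (M₁ : ℝ) (hM₁ : 0 < M₁)
    (hM₁P : ∀ x' y',
      ‖gradient (fun x'' => f x'' (ystar x'')) x' - Fsur f Gyx v x' y'‖ ≤ M₁ * ‖y' - ystar x'‖)
    -- the relaxed safe gradient flow (RXGF) with parameters `α, ε > 0`, on `t ≥ 0`: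
    (α ε : ℝ) (hα : 0 < α) (hε : 0 < ε)
    (x : ℝ → Vec n) (y : ℝ → Vec m) (lam : ℝ → ℝ)
    (hlam : ∀ t, 0 ≤ t →
      ((¬(gradx (hbar g) (x t) (y t) = 0 ∧ grady (hbar g) (x t) (y t) = 0)) →
        lam t = max (-⟪gradx (hbar g) (x t) (y t), gradx f (x t) (y t)⟫
              - ⟪grady (hbar g) (x t) (y t), grady f (x t) (y t)⟫
              + α * (hbar g (x t) (y t) - ε ^ 2)) 0
          / (‖gradx (hbar g) (x t) (y t)‖ ^ 2 + ‖grady (hbar g) (x t) (y t)‖ ^ 2)) ∧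
      ((gradx (hbar g) (x t) (y t) = 0 ∧ grady (hbar g) (x t) (y t) = 0) → lam t = 0))
    (hx : ∀ t, 0 ≤ t → HasDerivAt x
      (-gradx f (x t) (y t) - lam t • gradx (hbar g) (x t) (y t)) t)
    (hy : ∀ t, 0 ≤ t → HasDerivAt y
      (-grady f (x t) (y t) - lam t • grady (hbar g) (x t) (y t)) t)
    -- the initial condition lies in the sublevel set
    (h0 : hbar g (x 0) (y 0) ≤ ε ^ 2)
    -- `f*_ε` is the optimal value of the relaxed problem `min f` s.t. `h(x,y) ≤ ε²`
    (fstarε : ℝ)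
    (hfstarε : IsGLB {r : ℝ | ∃ (x' : Vec n) (y' : Vec m), hbar g x' y' ≤ ε ^ 2 ∧ f x' y' = r}
      fstarε)
    -- the constant `c` and the Lyapunov function `E`
    (c : ℝ) (hc : c = μg ^ 2 / (μg ^ 2 + (Lyxg : ℝ) ^ 2))
    (EE : ℝ → ℝ)
    (hEE : ∀ t, EE t = f (x t) (y t) - fstarε
      + c * ∫ τ in (0:ℝ)..t, ‖Fsur f Gyx v (x τ) (y τ)‖ ^ 2) :
    (∀ t, 0 ≤ t → EE t ≤ EE 0) ∧
    (∀ t, 0 < t →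
      (1 / t) * ∫ τ in (0:ℝ)..t, ‖gradient (fun x' => f x' (ystar x')) (x τ)‖ ^ 2
        ≤ 2 * M₁ ^ 2 * ε ^ 2 / μg ^ 2 + (2 / (c * t)) * (f (x 0) (y 0) - fstarε)) := by
  obtain rfl : Gyx = mixedHessian g := funext₂ fun x y => (hGyx x y).fderiv.symm
  obtain rfl : Gyy = lowerHessian g := funext₂ fun x y => (hGyy x y).fderiv.symm
  have hfdiff := hf.differentiable one_ne_zero
  have hhdiff := differentiable_lowerResidual hg
  have hflow : IsSafeGradientFlow (uncurryL2 f) (uncurryL2 (lowerResidual g)) α (ε ^ 2)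
      fun t => WithLp.toLp 2 (x t, y t) :=
    isSafeGradientFlow_toLp hfdiff hhdiff
      (fun t ht => eq_safeMultiplier_toLp hfdiff hhdiff (x t) (y t) (hlam t ht).1 (hlam t ht).2)
      hx hy
  exact stmt_14_general hf hg hμg hsc hgyLx hystar hv hM₁.le hM₁P hα.le hε.le hflow h0 hfstarε hc
    hEE

end
end

section
/- Suppose Assumption A2 holds and let β > 0. Let t ↦ (x(t), y(t)), t ≥ 0, be a continuously differentiable solution of the prediction-correction dynamics. Then for every t ≥ 0, ‖y(t) − y*(x(t))‖ ≤ (1/μ_g) ‖∇_y g(x(0), y(0))‖ e^{−β t}. -/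
open Set MeasureTheory
open scoped NNReal RealInnerProductSpace

noncomputable section

/-!
The correction term is chosen so that the residual `r(t) = ∇_y g(x(t), y(t))` solves `ṙ = -β r`
whatever the motion of `x`: by the chain rule `ṙ = ∇²_{yx}g ẋ + ∇²_{yy}g ẏ`, and the dynamics make
the second term equal to `-β r - ∇²_{yx}g ẋ`. Hence `r(t) = e^{-βt} r(0)`. Adding the quadratic
growth of `g(x, ·)` around its minimizer to the tangent inequality at `y` bounds the distance from
`y` to the minimizer by `‖r‖ / μ_g`.
-/

open Filter Topology

section UniformConvexity

variable {E : Type*} [NormedAddCommGroup E] [NormedSpace ℝ E]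
  {s : Set E} {φ : ℝ → ℝ} {f : E → ℝ} {f' : StrongDual ℝ E} {x y z : E}

lemma uniformConvexOn_slope_lineMap_le (hf : UniformConvexOn s φ f) (hx : x ∈ s) (hy : y ∈ s)
    {t : ℝ} (ht : t ∈ Ioo 0 1) :
    slope (f ∘ AffineMap.lineMap x y) 0 t ≤ f y - f x - (1 - t) * φ ‖y - x‖ := by
  have hconv := hf.2 hx hy (sub_nonneg.2 ht.2.le) ht.1.le (sub_add_cancel 1 t)
  rw [← AffineMap.lineMap_apply_module x y t, norm_sub_rev, smul_eq_mul, smul_eq_mul] at hconv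
  rw [slope_def_field, Function.comp_apply, Function.comp_apply, AffineMap.lineMap_apply_zero,
    sub_zero, div_le_iff₀ ht.1]
  linarith

lemma uniformConvexOn_add_add_le_of_le_slope (hf : UniformConvexOn s φ f) (hx : x ∈ s)
    (hy : y ∈ s) {d : ℝ → ℝ} {c : ℝ} (hd : Tendsto d (𝓝[>] 0) (𝓝 c))
    (hle : ∀ᶠ t in 𝓝[>] 0, d t ≤ slope (f ∘ AffineMap.lineMap x y) 0 t) :
    f x + c + φ ‖y - x‖ ≤ f y := by
  have hcont : Continuous fun t : ℝ => f y - f x - (1 - t) * φ ‖y - x‖ := by fun_prop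
  have hbound : ∀ᶠ t in 𝓝[>] 0, d t ≤ f y - f x - (1 - t) * φ ‖y - x‖ := by
    filter_upwards [hle, Ioo_mem_nhdsGT zero_lt_one] with t hdt ht
    exact hdt.trans (uniformConvexOn_slope_lineMap_le hf hx hy ht)
  have hlim := le_of_tendsto_of_tendsto hd ((hcont.tendsto 0).mono_left nhdsWithin_le_nhds) hbound
  linarith

lemma uniformConvexOn_add_add_le_of_hasFDerivWithinAt (hf : UniformConvexOn s φ f) (hx : x ∈ s)
    (hy : y ∈ s) (hf' : HasFDerivWithinAt f f' s x) :
    f x + f' (y - x) + φ ‖y - x‖ ≤ f y := by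
  have hmaps : MapsTo (AffineMap.lineMap x y) (Ioo (0 : ℝ) 1) s := fun _ ht =>
    hf.1.lineMap_mem hx hy (Ioo_subset_Icc_self ht)
  have hderiv : HasDerivWithinAt (f ∘ AffineMap.lineMap x y) (f' (y - x)) (Ioo (0 : ℝ) 1) 0 :=
    HasFDerivWithinAt.comp_hasDerivWithinAt 0 (by simpa using hf')
      AffineMap.hasDerivWithinAt_lineMap hmaps
  have hslope := (hasDerivWithinAt_iff_tendsto_slope' (by simp)).1 hderiv
  rw [nhdsWithin_Ioo_eq_nhdsGT zero_lt_one] at hslope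
  exact uniformConvexOn_add_add_le_of_le_slope hf hx hy hslope (.of_forall fun _ => le_rfl)

lemma uniformConvexOn_add_le_of_isMinOn (hf : UniformConvexOn s φ f) (hz : z ∈ s)
    (hmin : IsMinOn f s z) (hy : y ∈ s) : f z + φ ‖y - z‖ ≤ f y := by
  have hslope : ∀ᶠ t : ℝ in 𝓝[>] 0, 0 ≤ slope (f ∘ AffineMap.lineMap z y) 0 t := by
    filter_upwards [Ioo_mem_nhdsGT zero_lt_one] with t ht
    have hle : f z ≤ f (AffineMap.lineMap z y t) :=
      hmin (hf.1.lineMap_mem hz hy (Ioo_subset_Icc_self ht))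
    rw [slope_def_field, Function.comp_apply, Function.comp_apply, AffineMap.lineMap_apply_zero,
      sub_zero]
    exact div_nonneg (sub_nonneg.2 hle) ht.1.le
  simpa using uniformConvexOn_add_add_le_of_le_slope hf hz hy tendsto_const_nhds hslope

lemma strongConvexOn_mul_norm_sub_le_of_isMinOn {m : ℝ} (hf : StrongConvexOn s m f)
    (hz : z ∈ s) (hmin : IsMinOn f s z) (hy : y ∈ s) (hf' : HasFDerivWithinAt f f' s y) :
    m * ‖y - z‖ ≤ ‖f'‖ := by
  rcases (norm_nonneg (y - z)).eq_or_lt with h_zero | h_pos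
  · simp [← h_zero]
  refine le_of_mul_le_mul_right ?_ h_pos
  have hgrowth := uniformConvexOn_add_le_of_isMinOn hf hz hmin hy
  have htangent := uniformConvexOn_add_add_le_of_hasFDerivWithinAt hf hy hz hf'
  rw [← neg_sub y z, map_neg, norm_neg] at htangent
  calc m * ‖y - z‖ * ‖y - z‖ ≤ f' (y - z) := by linarith
    _ ≤ ‖f'‖ * ‖y - z‖ := (le_abs_self _).trans (f'.le_opNorm _)

end UniformConvexity

lemma eq_exp_smul_of_hasDerivWithinAt_smul {E : Type*} [NormedAddCommGroup E] [NormedSpace ℝ E]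
    {u : ℝ → E} {c a : ℝ} (hu : ∀ t, a ≤ t → HasDerivWithinAt u (c • u t) (Ici a) t)
    {t : ℝ} (ht : a ≤ t) : u t = Real.exp (c * (t - a)) • u a := by
  have hderiv : ∀ τ, a ≤ τ →
      HasDerivWithinAt (fun σ => Real.exp (-c * (σ - a)) • u σ) 0 (Ici a) τ := fun τ hτ => by
    have hexp : HasDerivAt (fun σ => Real.exp (-c * (σ - a)))
        (Real.exp (-c * (τ - a)) * (-c * 1)) τ :=
      (((hasDerivAt_id τ).sub_const a).const_mul (-c)).exp
    refine (hexp.hasDerivWithinAt.smul (hu τ hτ)).congr_deriv ?_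
    module
  have hconst : Real.exp (-c * (t - a)) • u t = u a := by
    simpa using constant_of_has_deriv_right_zero
      (fun τ hτ => (hderiv τ hτ.1).continuousWithinAt.mono Icc_subset_Ici_self)
      (fun τ hτ => (hderiv τ hτ.1).mono (Ici_subset_Ici.2 hτ.1)) t ⟨ht, le_rfl⟩
  rw [← hconst, smul_smul, ← Real.exp_add, neg_mul, add_neg_cancel, Real.exp_zero, one_smul]

lemma hasFDerivAt_uncurry_coprod_of_continuous {X Y E : Type*} [NormedAddCommGroup X]
    [NormedSpace ℝ X] [NormedAddCommGroup Y] [NormedSpace ℝ Y] [NormedAddCommGroup E]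
    [NormedSpace ℝ E] {r : X → Y → E} {rx : X → Y → X →L[ℝ] E} {ry : X → Y → Y →L[ℝ] E}
    (hrx : ∀ a b, HasFDerivAt (r · b) (rx a b) a) (hry : ∀ a b, HasFDerivAt (r a ·) (ry a b) b)
    (hrx_cont : Continuous fun p : X × Y => rx p.1 p.2)
    (hry_cont : Continuous fun p : X × Y => ry p.1 p.2) (a : X) (b : Y) :
    HasFDerivAt ↿r ((rx a b).coprod (ry a b)) (a, b) :=
  (hasStrictFDerivAt_uncurry_coprod (u := (a, b))
    (.of_forall fun p => hrx p.1 p.2) (.of_forall fun p => hry p.1 p.2)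
    hrx_cont.continuousAt hry_cont.continuousAt).hasFDerivAt

lemma hasGradientAt_grady {n m : ℕ} {g : Vec n → Vec m → ℝ}
    (hg : Differentiable ℝ (Function.uncurry g)) (a : Vec n) (b : Vec m) :
    HasGradientAt (g a) (grady g a b) b :=
  ((hg (a, b)).comp b (hasFDerivAt_prodMk_right a b).differentiableAt).hasGradientAt

section PredictionCorrection

variable {X Y : Type*} [NormedAddCommGroup X] [NormedSpace ℝ X] [NormedAddCommGroup Y]
  {x xd : ℝ → X} {y yd : ℝ → Y} {β : ℝ}

lemma eq_exp_smul_of_prediction_correction [NormedSpace ℝ Y] {E : Type*} [NormedAddCommGroup E]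
    [NormedSpace ℝ E] {r : X → Y → E} {rx : X → Y → X →L[ℝ] E} {ry : X → Y → Y →L[ℝ] E}
    (hr : ∀ a b, HasFDerivAt ↿r ((rx a b).coprod (ry a b)) (a, b))
    (hx : ∀ t, 0 ≤ t → HasDerivWithinAt x (xd t) (Ici 0) t)
    (hy : ∀ t, 0 ≤ t → HasDerivWithinAt y (yd t) (Ici 0) t)
    (hyd : ∀ t, 0 ≤ t →
      ry (x t) (y t) (yd t) = -(β • r (x t) (y t) + rx (x t) (y t) (xd t)))
    {t : ℝ} (ht : 0 ≤ t) :
    r (x t) (y t) = Real.exp (-β * t) • r (x 0) (y 0) := by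
  have hode : ∀ τ, 0 ≤ τ →
      HasDerivWithinAt (fun σ => r (x σ) (y σ)) (-β • r (x τ) (y τ)) (Ici 0) τ := fun τ hτ => by
    refine ((hr (x τ) (y τ)).comp_hasDerivWithinAt τ ((hx τ hτ).prodMk (hy τ hτ))).congr_deriv ?_
    rw [ContinuousLinearMap.coprod_apply, hyd τ hτ]
    module
  simpa using eq_exp_smul_of_hasDerivWithinAt_smul hode ht

theorem stmt_16_general [InnerProductSpace ℝ Y] [CompleteSpace Y]
    {g : X → Y → ℝ} {G : X → Y → Y} {Gx : X → Y → X →L[ℝ] Y} {Gy : X → Y → Y →L[ℝ] Y}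
    {ystar : X → Y} {μ : ℝ} (hμ : 0 < μ) (hsc : ∀ a, StrongConvexOn univ μ (g a))
    (hG : ∀ a b, HasGradientAt (g a) (G a b) b)
    (hG' : ∀ a b, HasFDerivAt ↿G ((Gx a b).coprod (Gy a b)) (a, b))
    (hystar : ∀ a, IsMinOn (g a) univ (ystar a))
    (hx : ∀ t, 0 ≤ t → HasDerivWithinAt x (xd t) (Ici 0) t)
    (hy : ∀ t, 0 ≤ t → HasDerivWithinAt y (yd t) (Ici 0) t)
    (hyd : ∀ t, 0 ≤ t →
      Gy (x t) (y t) (yd t) = -(β • G (x t) (y t) + Gx (x t) (y t) (xd t)))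
    (t : ℝ) (ht : 0 ≤ t) :
    ‖y t - ystar (x t)‖ ≤ (1 / μ) * ‖G (x 0) (y 0)‖ * Real.exp (-β * t) := by
  have herror : μ * ‖y t - ystar (x t)‖ ≤ ‖G (x t) (y t)‖ := by
    simpa using strongConvexOn_mul_norm_sub_le_of_isMinOn (hsc (x t)) (mem_univ _)
      (hystar (x t)) (mem_univ (y t)) (hG (x t) (y t)).hasFDerivAt.hasFDerivWithinAt
  have hdecay : ‖G (x t) (y t)‖ = Real.exp (-β * t) * ‖G (x 0) (y 0)‖ := by
    rw [eq_exp_smul_of_prediction_correction hG' hx hy hyd ht, norm_smul, Real.norm_eq_abs,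
      Real.abs_exp]
  calc ‖y t - ystar (x t)‖ ≤ ‖G (x t) (y t)‖ / μ := (le_div_iff₀' hμ).2 herror
    _ = (1 / μ) * ‖G (x 0) (y 0)‖ * Real.exp (-β * t) := by rw [hdecay]; ring

end PredictionCorrection

/-- along the prediction-correction dynamics, the lower-level trajectory contracts
to the optimal trajectory: `‖y(t) − y*(x(t))‖ ≤ (1/μ_g)‖∇_y g(x(0),y(0))‖ e^{−βt}`. -/
theorem stmt_16 {n m : ℕ} (f g : Vec n → Vec m → ℝ)
    (hf : ContDiff ℝ 1 (Function.uncurry f))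
    -- Assumption A2
    (hg : ContDiff ℝ 2 (Function.uncurry g))
    (μg : ℝ) (hμg : 0 < μg)
    (hsc : ∀ x, StrongConvexOn Set.univ μg (g x))
    (Lyyg Lyxg : ℝ≥0)
    (hgyLy : ∀ x, LipschitzWith Lyyg fun y => grady g x y)
    (hgyLx : ∀ y, LipschitzWith Lyxg fun x => grady g x y)
    (Gyx : Vec n → Vec m → Vec n →L[ℝ] Vec m)
    (Gyy : Vec n → Vec m → Vec m →L[ℝ] Vec m)
    (hGyx : ∀ x y, HasFDerivAt (fun x' => grady g x' y) (Gyx x y) x)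
    (hGyy : ∀ x y, HasFDerivAt (fun y' => grady g x y') (Gyy x y) y)
    (Cyxg Cyyg : ℝ≥0)
    (hGyxL : LipschitzWith Cyxg fun p : Vec n × Vec m => Gyx p.1 p.2)
    (hGyyL : LipschitzWith Cyyg fun p : Vec n × Vec m => Gyy p.1 p.2)
    -- lower-level solution map and surrogate direction `v`
    (ystar : Vec n → Vec m)
    (hystar : ∀ x', IsMinOn (g x') Set.univ (ystar x'))
    (v : Vec n → Vec m → Vec m)
    (hv : ∀ x' y', Gyy x' y' (v x' y') = grady f x' y')
    -- the prediction-correction dynamics with parameter `β > 0`, on `t ≥ 0`: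
    -- `ẋ = −F(x,y)`, `ẏ = −[∇²_{yy}g]⁻¹ (β ∇_y g + ∇²_{yx}g ẋ)`
    (β : ℝ) (hβ : 0 < β)
    (x : ℝ → Vec n) (y : ℝ → Vec m) (yd : ℝ → Vec m)
    (hx : ∀ t, 0 ≤ t → HasDerivAt x (-Fsur f Gyx v (x t) (y t)) t)
    (hy : ∀ t, 0 ≤ t → HasDerivAt y (yd t) t)
    (hyd : ∀ t, 0 ≤ t →
      Gyy (x t) (y t) (yd t)
        = -(β • grady g (x t) (y t) + Gyx (x t) (y t) (-Fsur f Gyx v (x t) (y t))))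
    :
    ∀ t, 0 ≤ t →
      ‖y t - ystar (x t)‖ ≤ (1 / μg) * ‖grady g (x 0) (y 0)‖ * Real.exp (-β * t) :=
  stmt_16_general hμg hsc (hasGradientAt_grady (hg.differentiable two_ne_zero))
    (hasFDerivAt_uncurry_coprod_of_continuous hGyx hGyy hGyxL.continuous hGyyL.continuous) hystar
    (fun t ht => (hx t ht).hasDerivWithinAt) (fun t ht => (hy t ht).hasDerivWithinAt) hyd

end
end

section
/- Suppose Assumptions A1 and A2 hold, let β > 0, and let t ↦ (x(t), y(t)), t ≥ 0, be a continuously differentiable solution of the prediction-correction dynamics with arbitrary initialization (x(0), y(0)). Let x* be a global minimizer of ℓ. Then for every t > 0, (1/(2t)) ∫₀ᵗ ‖∇ℓ(x(τ))‖² dτ ≤ (1/t) ( ℓ(x(0)) − ℓ(x*) + (M₁² / (4 β μ_g²)) ‖∇_y g(x(0), y(0))‖² ). -/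
open Set MeasureTheory
open scoped NNReal RealInnerProductSpace

noncomputable section

/-!
The residual `e = ∇_y g(x, y)` obeys `ė = -β e` along the dynamics: the correction term contributes
the decay and the prediction term cancels the drift caused by `x`. By strong convexity the residual
controls `‖y - y*(x)‖`, hence the error of the surrogate, so `x` follows a gradient flow of `ℓ`
perturbed by at most `(M₁ / μ_g) ‖e‖`. The Lyapunov function `ℓ(x) + M₁² / (4 β μ_g²) ‖e‖²` then
decreases at rate at least `‖∇ℓ(x)‖² / 2`, and integrating gives the bound.
By the implicit function theorem `y*` is `C¹`, so that `∇ℓ` is continuous and the integral is a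
genuine one.
-/

open Filter Function
open scoped Gradient Topology

section UniformConvexity

variable {E : Type*} [NormedAddCommGroup E] [NormedSpace ℝ E]
  {s : Set E} {ψ : ℝ → ℝ} {φ : E → ℝ} {φ' : ℝ} {a b : E}

theorem uniformConvexOn_add_lineDeriv_add_le (hφ : UniformConvexOn s ψ φ) (ha : a ∈ s) (hb : b ∈ s)
    (hφ' : HasLineDerivAt ℝ φ φ' a (b - a)) : φ a + φ' + ψ ‖b - a‖ ≤ φ b := by
  have secant_le : ∀ᶠ t : ℝ in 𝓝[>] 0,
      t⁻¹ • (φ (a + t • (b - a)) - φ a) ≤ φ b - φ a - (1 - t) * ψ ‖b - a‖ := by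
    filter_upwards [Ioo_mem_nhdsGT one_pos] with t ⟨ht₀, ht₁⟩
    have h := hφ.2 ha hb (sub_nonneg.2 ht₁.le) ht₀.le (sub_add_cancel 1 t)
    rw [show (1 - t) • a + t • b = a + t • (b - a) by module, norm_sub_rev] at h
    simp only [smul_eq_mul] at h ⊢
    rw [inv_mul_le_iff₀ ht₀]
    linarith
  have bound_tendsto : Tendsto (fun t : ℝ => φ b - φ a - (1 - t) * ψ ‖b - a‖) (𝓝[>] 0)
      (𝓝 (φ b - φ a - (1 - 0) * ψ ‖b - a‖)) :=
    (Continuous.tendsto (by fun_prop) 0).mono_left nhdsWithin_le_nhds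
  have := le_of_tendsto_of_tendsto hφ'.tendsto_slope_zero_right bound_tendsto secant_le
  linarith

end UniformConvexity

section StrongMonotonicity

variable {F : Type*} [NormedAddCommGroup F] [InnerProductSpace ℝ F]
  {μ : ℝ} {G : F → F} {φ : F → ℝ} {A : F →L[ℝ] F} {a b : F}

/-- Strong monotonicity, with modulus `μ`, of an operator on a real inner product space. The
gradient of a differentiable `μ`-strongly convex function is the motivating example. -/
def StronglyMonotone (μ : ℝ) (G : F → F) : Prop :=
  ∀ a b, μ * ‖b - a‖ ^ 2 ≤ ⟪G b - G a, b - a⟫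

namespace StronglyMonotone

theorem mul_norm_sub_le (hG : StronglyMonotone μ G) (a b : F) : μ * ‖b - a‖ ≤ ‖G b - G a‖ := by
  rcases (norm_nonneg (b - a)).eq_or_lt with h | h
  · simp [← h]
  · refine le_of_mul_le_mul_right ?_ h
    calc μ * ‖b - a‖ * ‖b - a‖ = μ * ‖b - a‖ ^ 2 := by ring
      _ ≤ ⟪G b - G a, b - a⟫ := hG a b
      _ ≤ ‖G b - G a‖ * ‖b - a‖ := real_inner_le_norm _ _

theorem injective (hμ : 0 < μ) (hG : StronglyMonotone μ G) : Injective G := by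
  intro a b hab
  have h := hG.mul_norm_sub_le b a
  rw [hab, sub_self, norm_zero] at h
  exact sub_eq_zero.1 (norm_le_zero_iff.1 (nonpos_of_mul_nonpos_right h hμ))

theorem mul_norm_sq_le_inner_of_hasFDerivAt (hG : StronglyMonotone μ G) (hA : HasFDerivAt G A a)
    (u : F) : μ * ‖u‖ ^ 2 ≤ ⟪A u, u⟫ := by
  have slope_tendsto := (hA.hasLineDerivAt u).tendsto_slope_zero_right.inner (𝕜 := ℝ)
    (tendsto_const_nhds (x := u))
  refine ge_of_tendsto slope_tendsto ?_
  filter_upwards [self_mem_nhdsWithin] with t (ht : 0 < t)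
  have h := hG a (a + t • u)
  rw [add_sub_cancel_left, norm_smul, mul_pow, Real.norm_eq_abs, sq_abs,
    real_inner_smul_right] at h
  rw [real_inner_smul_left, le_inv_mul_iff₀ ht]
  exact le_of_mul_le_mul_left (by linarith) ht

theorem isInvertible_of_hasFDerivAt [CompleteSpace F] (hμ : 0 < μ) (hG : StronglyMonotone μ G)
    (hA : HasFDerivAt G A a) : A.IsInvertible := by
  obtain ⟨U, rfl⟩ : IsUnit A := by
    refine A.isUnit_of_forall_le_norm_inner_map (c := ⟨μ, hμ.le⟩) hμ fun u => ?_
    calc ‖u‖ ^ 2 * μ = μ * ‖u‖ ^ 2 := mul_comm _ _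
      _ ≤ ⟪A u, u⟫ := hG.mul_norm_sq_le_inner_of_hasFDerivAt hA u
      _ ≤ ‖⟪A u, u⟫‖ := Real.le_norm_self _
  exact ⟨ContinuousLinearEquiv.unitsEquiv ℝ F U, rfl⟩

end StronglyMonotone

variable [CompleteSpace F]

theorem stronglyMonotone_gradient (hφ : StrongConvexOn univ μ φ) (hd : Differentiable ℝ φ) :
    StronglyMonotone μ (∇ φ) := by
  have support (a b : F) : φ a + ⟪∇ φ a, b - a⟫ + μ / 2 * ‖b - a‖ ^ 2 ≤ φ b := by
    rw [inner_gradient_left]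
    exact uniformConvexOn_add_lineDeriv_add_le hφ (mem_univ a) (mem_univ b)
      ((hd a).hasFDerivAt.hasLineDerivAt _)
  intro a b
  have hab := support a b
  have hba := support b a
  rw [norm_sub_rev, ← neg_sub b a, inner_neg_right] at hba
  rw [inner_sub_left]
  linarith

theorem gradient_eq_zero_of_isLocalMin (h : IsLocalMin φ a) : ∇ φ a = 0 := by
  rw [gradient, h.fderiv_eq_zero, map_zero]

theorem mul_norm_sub_argmin_le_norm_gradient {z : F}
    (hφ : StrongConvexOn univ μ φ) (hd : Differentiable ℝ φ) (hz : IsMinOn φ univ z) (y : F) :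
    μ * ‖y - z‖ ≤ ‖∇ φ y‖ := by
  have h := (stronglyMonotone_gradient hφ hd).mul_norm_sub_le z y
  rwa [gradient_eq_zero_of_isLocalMin (hz.isLocalMin univ_mem), sub_zero] at h

end StrongMonotonicity

section ImplicitFunction

variable {𝕜 : Type*} [RCLike 𝕜]
  {E₁ : Type*} [NormedAddCommGroup E₁] [NormedSpace 𝕜 E₁]
  {E₂ : Type*} [NormedAddCommGroup E₂] [NormedSpace 𝕜 E₂]
  {H : Type*} [NormedAddCommGroup H] [NormedSpace 𝕜 H]
  {Φ : E₁ × E₂ → H}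

theorem contDiff_of_forall_apply_eq [CompleteSpace E₁] [CompleteSpace E₂] [CompleteSpace H]
    {k : WithTop ℕ∞} (hk : k ≠ 0) (hΦ : ContDiff 𝕜 k Φ) (hinj : ∀ x, Injective fun y => Φ (x, y))
    {ψ : E₁ → E₂} {c : H} (hψ : ∀ x, Φ (x, ψ x) = c)
    (hinv : ∀ x, (fderiv 𝕜 Φ (x, ψ x) ∘L .inr 𝕜 E₁ E₂).IsInvertible) : ContDiff 𝕜 k ψ := by
  refine contDiff_iff_contDiffAt.2 fun x => ?_
  have hΦx : ContDiffAt 𝕜 k Φ (x, ψ x) := hΦ.contDiffAt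
  refine (hΦx.contDiffAt_implicitFunction hk (hinv x)).congr_of_eventuallyEq ?_
  filter_upwards [hΦx.eventually_apply_implicitFunction hk (hinv x)] with x' hx'
  exact hinj x' (((hψ x').trans (hψ x).symm).trans hx'.symm)

theorem hasDerivWithinAt_comp_prodMk {B : E₁ →L[𝕜] H} {A : E₂ →L[𝕜] H} {x : 𝕜 → E₁} {y : 𝕜 → E₂}
    {x' : E₁} {y' : E₂} {s : Set 𝕜} {t : 𝕜} (hΦ : DifferentiableAt 𝕜 Φ (x t, y t))
    (hB : HasFDerivAt (fun u => Φ (u, y t)) B (x t))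
    (hA : HasFDerivAt (fun u => Φ (x t, u)) A (y t))
    (hx : HasDerivWithinAt x x' s t) (hy : HasDerivWithinAt y y' s t) :
    HasDerivWithinAt (fun τ => Φ (x τ, y τ)) (B x' + A y') s t := by
  have hB' := hB.unique (hΦ.hasFDerivAt.comp (x t) (hasFDerivAt_prodMk_left (x t) (y t)))
  have hA' := hA.unique (hΦ.hasFDerivAt.comp (y t) (hasFDerivAt_prodMk_right (x t) (y t)))
  refine (hΦ.hasFDerivAt.comp_hasDerivWithinAt t (hx.prodMk hy)).congr_deriv ?_
  simp [hB', hA', ← map_add]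

end ImplicitFunction

section ParametricMinimization

variable {E F : Type*} [NormedAddCommGroup E] [NormedSpace ℝ E]
  [NormedAddCommGroup F] [InnerProductSpace ℝ F] [CompleteSpace F]
  {g : E → F → ℝ} {k : WithTop ℕ∞}

theorem contDiff_gradient_right (hg : ContDiff ℝ (k + 1) (uncurry g)) :
    ContDiff ℝ k fun p : E × F => ∇ (g p.1) p.2 :=
  (InnerProductSpace.toDual ℝ F).symm.contDiff.comp <|
    ContDiff.fderiv (f := fun p : E × F => g p.1)
      (hg.comp ((contDiff_fst.comp contDiff_fst).prodMk contDiff_snd)) contDiff_snd le_rfl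

theorem contDiff_argmin [CompleteSpace E] (hk : k ≠ 0) (hg : ContDiff ℝ (k + 1) (uncurry g))
    {μ : ℝ} (hμ : 0 < μ) (hsc : ∀ x, StrongConvexOn univ μ (g x))
    {ystar : E → F} (hystar : ∀ x, IsMinOn (g x) univ (ystar x)) : ContDiff ℝ k ystar := by
  have hmono x : StronglyMonotone μ (∇ (g x)) :=
    stronglyMonotone_gradient (hsc x) ((hg.differentiable (by simp)).comp
      ((differentiable_const x).prodMk differentiable_id))
  have hgrad := contDiff_gradient_right hg
  refine contDiff_of_forall_apply_eq hk hgrad (fun x => (hmono x).injective hμ)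
    (fun x => gradient_eq_zero_of_isLocalMin ((hystar x).isLocalMin univ_mem)) fun x => ?_
  exact (hmono x).isInvertible_of_hasFDerivAt hμ
    ((hgrad.differentiable hk _).hasFDerivAt.comp (ystar x) (hasFDerivAt_prodMk_right x (ystar x)))

theorem hasDerivWithinAt_gradient_of_prediction_correction (hg : ContDiff ℝ 2 (uncurry g))
    {x : ℝ → E} {y : ℝ → F} {x' : E} {y' : F} {B : E →L[ℝ] F} {A : F →L[ℝ] F} {β t : ℝ} {s : Set ℝ}
    (hB : HasFDerivAt (fun u => ∇ (g u) (y t)) B (x t)) (hA : HasFDerivAt (∇ (g (x t))) A (y t))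
    (hx : HasDerivWithinAt x x' s t) (hy : HasDerivWithinAt y y' s t)
    (hy' : A y' = -(β • ∇ (g (x t)) (y t) + B x')) :
    HasDerivWithinAt (fun τ => ∇ (g (x τ)) (y τ)) (-(β • ∇ (g (x t)) (y t))) s t := by
  have hgrad : ContDiff ℝ 1 fun p : E × F => ∇ (g p.1) p.2 :=
    contDiff_gradient_right (by rwa [one_add_one_eq_two])
  refine (hasDerivWithinAt_comp_prodMk (hgrad.differentiable one_ne_zero _)
    hB hA hx hy).congr_deriv ?_
  rw [hy']
  abel

end ParametricMinimization

section PerturbedGradientFlow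

variable {E F : Type*} [NormedAddCommGroup E] [InnerProductSpace ℝ E] [CompleteSpace E]
  [NormedAddCommGroup F] [InnerProductSpace ℝ F]
  {ℓ : E → ℝ} {x w : ℝ → E} {e : ℝ → F} {K β a b : ℝ}

theorem hasDerivWithinAt_perturbed_gradient_flow_lyapunov {s : Set ℝ} {t c : ℝ}
    (hℓ : DifferentiableAt ℝ ℓ (x t)) (hx : HasDerivWithinAt x (-w t) s t)
    (he : HasDerivWithinAt e (-(β • e t)) s t) :
    HasDerivWithinAt (fun τ => ℓ (x τ) + c * ‖e τ‖ ^ 2)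
      (-(⟪∇ ℓ (x t), w t⟫ + 2 * c * β * ‖e t‖ ^ 2)) s t := by
  refine ((hℓ.hasFDerivAt.comp_hasDerivWithinAt t hx).add (he.norm_sq.const_mul c)).congr_deriv ?_
  rw [map_neg, inner_gradient_left, inner_neg_right, real_inner_smul_right,
    real_inner_self_eq_norm_sq]
  ring

theorem integral_sq_norm_gradient_le_of_perturbed_gradient_flow (hab : a ≤ b) (hβ : 0 < β)
    (hℓ : ContDiff ℝ 1 ℓ) (hx : ∀ t ∈ Icc a b, HasDerivWithinAt x (-w t) (Icc a b) t)
    (he : ∀ t ∈ Icc a b, HasDerivWithinAt e (-(β • e t)) (Icc a b) t)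
    (hw : ∀ t ∈ Icc a b, ‖∇ ℓ (x t) - w t‖ ≤ K * ‖e t‖) :
    1 / 2 * ∫ t in a..b, ‖∇ ℓ (x t)‖ ^ 2 ≤ ℓ (x a) - ℓ (x b) + K ^ 2 / (4 * β) * ‖e a‖ ^ 2 := by
  set c := K ^ 2 / (4 * β) with hc
  have hV t (ht : t ∈ Icc a b) := (hasDerivWithinAt_perturbed_gradient_flow_lyapunov (c := c)
    (hℓ.differentiable one_ne_zero (x t)) (hx t ht) (he t ht)).neg
  -- The decay of `c * ‖e‖ ^ 2` pays exactly for the error in `⟪∇ℓ, w⟫ ≥ (‖∇ℓ‖² - ‖∇ℓ - w‖²) / 2`.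
  have hdissipation t (ht : t ∈ Icc a b) :
      1 / 2 * ‖∇ ℓ (x t)‖ ^ 2 ≤ ⟪∇ ℓ (x t), w t⟫ + 2 * c * β * ‖e t‖ ^ 2 := by
    have herr : ‖∇ ℓ (x t) - w t‖ ^ 2 ≤ (K * ‖e t‖) ^ 2 := by gcongr; exact hw t ht
    rw [norm_sub_sq_real] at herr
    have hcβ : 2 * c * β * ‖e t‖ ^ 2 = 1 / 2 * (K * ‖e t‖) ^ 2 := by rw [hc]; field_simp; ring
    linarith [sq_nonneg ‖w t‖]
  have hcont : ContinuousOn (fun t => 1 / 2 * ‖∇ ℓ (x t)‖ ^ 2) (Icc a b) := by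
    have : Continuous (∇ ℓ) :=
      (InnerProductSpace.toDual ℝ E).symm.continuous.comp (hℓ.continuous_fderiv one_ne_zero)
    have hxc : ContinuousOn x (Icc a b) := fun t ht => (hx t ht).continuousWithinAt
    fun_prop
  have hint := intervalIntegral.integral_le_sub_of_hasDeriv_right_of_le hab
    (fun t ht => (hV t ht).continuousWithinAt)
    (fun t ht => ((hV t (Ioo_subset_Icc_self ht)).hasDerivAt
      (Icc_mem_nhds ht.1 ht.2)).hasDerivWithinAt)
    hcont.integrableOn_Icc (fun t ht => by simpa using hdissipation t (Ioo_subset_Icc_self ht))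
  simp only [intervalIntegral.integral_const_mul, Pi.neg_apply] at hint
  have : 0 ≤ c * ‖e b‖ ^ 2 := by positivity
  linarith

end PerturbedGradientFlow

section PredictionCorrection

variable {E F : Type*} [NormedAddCommGroup E] [InnerProductSpace ℝ E] [CompleteSpace E]
  [NormedAddCommGroup F] [InnerProductSpace ℝ F] [CompleteSpace F]

theorem stmt_17_general {f g : E → F → ℝ}
    (hf : ContDiff ℝ 1 (uncurry f)) (hg : ContDiff ℝ 2 (uncurry g))
    {μ : ℝ} (hμ : 0 < μ) (hsc : ∀ x, StrongConvexOn univ μ (g x))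
    {Gyx : E → F → E →L[ℝ] F} {Gyy : E → F → F →L[ℝ] F}
    (hGyx : ∀ x y, HasFDerivAt (fun x' => ∇ (g x') y) (Gyx x y) x)
    (hGyy : ∀ x y, HasFDerivAt (∇ (g x)) (Gyy x y) y)
    {ystar : E → F} (hystar : ∀ x, IsMinOn (g x) univ (ystar x))
    {S : E → F → E} {M : ℝ} (hM : 0 ≤ M)
    (hS : ∀ x y, ‖∇ (fun x' => f x' (ystar x')) x - S x y‖ ≤ M * ‖y - ystar x‖)
    {β : ℝ} (hβ : 0 < β) {x : ℝ → E} {y yd : ℝ → F}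
    (hx : ∀ t, 0 ≤ t → HasDerivWithinAt x (-S (x t) (y t)) (Ici 0) t)
    (hy : ∀ t, 0 ≤ t → HasDerivWithinAt y (yd t) (Ici 0) t)
    (hyd : ∀ t, 0 ≤ t → Gyy (x t) (y t) (yd t)
      = -(β • ∇ (g (x t)) (y t) + Gyx (x t) (y t) (-S (x t) (y t))))
    {c : ℝ} (hc : ∀ x', c ≤ f x' (ystar x')) {t : ℝ} (ht : 0 < t) :
    1 / (2 * t) * ∫ τ in (0:ℝ)..t, ‖∇ (fun x' => f x' (ystar x')) (x τ)‖ ^ 2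
      ≤ 1 / t * (f (x 0) (ystar (x 0)) - c
          + M ^ 2 / (4 * β * μ ^ 2) * ‖∇ (g (x 0)) (y 0)‖ ^ 2) := by
  have hℓ : ContDiff ℝ 1 fun x' => f x' (ystar x') :=
    hf.comp (contDiff_id.prodMk
      (contDiff_argmin one_ne_zero (by rwa [one_add_one_eq_two]) hμ hsc hystar))
  have hresidual τ (hτ : 0 ≤ τ) := hasDerivWithinAt_gradient_of_prediction_correction hg
    (hGyx _ _) (hGyy _ _) (hx τ hτ) (hy τ hτ) (hyd τ hτ)
  have hsurrogate x y : ‖∇ (fun x' => f x' (ystar x')) x - S x y‖ ≤ M / μ * ‖∇ (g x) y‖ := by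
    have hd : Differentiable ℝ (g x) :=
      (hg.differentiable two_ne_zero).comp ((differentiable_const x).prodMk differentiable_id)
    calc _ ≤ M * ‖y - ystar x‖ := hS x y
      _ = M / μ * (μ * ‖y - ystar x‖) := by field_simp
      _ ≤ M / μ * ‖∇ (g x) y‖ := by
        gcongr
        exact mul_norm_sub_argmin_le_norm_gradient (hsc x) hd (hystar x) y
  have hint := integral_sq_norm_gradient_le_of_perturbed_gradient_flow ht.le hβ hℓ
    (fun τ hτ => (hx τ hτ.1).mono Icc_subset_Ici_self)
    (fun τ hτ => (hresidual τ hτ.1).mono Icc_subset_Ici_self) fun τ _ => hsurrogate (x τ) (y τ)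
  calc _ = 1 / t * (1 / 2 * ∫ τ in (0:ℝ)..t, ‖∇ (fun x' => f x' (ystar x')) (x τ)‖ ^ 2) := by
        field_simp
    _ ≤ 1 / t * (f (x 0) (ystar (x 0)) - c
          + (M / μ) ^ 2 / (4 * β) * ‖∇ (g (x 0)) (y 0)‖ ^ 2) := by
        gcongr; linarith [hc (x t)]
    _ = _ := by field_simp

end PredictionCorrection

/-- convergence rate of the prediction-correction dynamics:
`(1/(2t)) ∫₀ᵗ ‖∇ℓ(x(τ))‖² dτ ≤ (1/t)(ℓ(x(0)) − ℓ(x*) + (M₁²/(4βμ_g²))‖∇_y g(x(0),y(0))‖²)`. -/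
theorem stmt_17 {n m : ℕ} (f g : Vec n → Vec m → ℝ)
    -- Assumption A1
    (hf : ContDiff ℝ 1 (Function.uncurry f))
    (Cxf Cyf : ℝ) (hCxf : 0 < Cxf) (hCyf : 0 < Cyf)
    (hfxB : ∀ x y, ‖gradx f x y‖ ≤ Cxf)
    (hfyB : ∀ x y, ‖grady f x y‖ ≤ Cyf)
    (Lxf Lyf : ℝ≥0)
    (hfxL : LipschitzWith Lxf fun p : Vec n × Vec m => gradx f p.1 p.2)
    (hfyL : LipschitzWith Lyf fun p : Vec n × Vec m => grady f p.1 p.2)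
    -- Assumption A2
    (hg : ContDiff ℝ 2 (Function.uncurry g))
    (μg : ℝ) (hμg : 0 < μg)
    (hsc : ∀ x, StrongConvexOn Set.univ μg (g x))
    (Lyyg Lyxg : ℝ≥0)
    (hgyLy : ∀ x, LipschitzWith Lyyg fun y => grady g x y)
    (hgyLx : ∀ y, LipschitzWith Lyxg fun x => grady g x y)
    (Gyx : Vec n → Vec m → Vec n →L[ℝ] Vec m)
    (Gyy : Vec n → Vec m → Vec m →L[ℝ] Vec m)
    (hGyx : ∀ x y, HasFDerivAt (fun x' => grady g x' y) (Gyx x y) x)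
    (hGyy : ∀ x y, HasFDerivAt (fun y' => grady g x y') (Gyy x y) y)
    (Cyxg Cyyg : ℝ≥0)
    (hGyxL : LipschitzWith Cyxg fun p : Vec n × Vec m => Gyx p.1 p.2)
    (hGyyL : LipschitzWith Cyyg fun p : Vec n × Vec m => Gyy p.1 p.2)
    -- lower-level solution map, surrogate direction `v`, and the constant `M₁`
    (ystar : Vec n → Vec m)
    (hystar : ∀ x', IsMinOn (g x') Set.univ (ystar x'))
    (v : Vec n → Vec m → Vec m)
    (hv : ∀ x' y', Gyy x' y' (v x' y') = grady f x' y')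
    (M₁ : ℝ) (hM₁ : 0 < M₁)
    (hM₁P : ∀ x' y',
      ‖gradient (fun x'' => f x'' (ystar x'')) x' - Fsur f Gyx v x' y'‖ ≤ M₁ * ‖y' - ystar x'‖)
    -- the prediction-correction dynamics with parameter `β > 0`, on `t ≥ 0`:
    -- `ẋ = −F(x,y)`, `ẏ = −[∇²_{yy}g]⁻¹ (β ∇_y g + ∇²_{yx}g ẋ)`
    (β : ℝ) (hβ : 0 < β)
    (x : ℝ → Vec n) (y : ℝ → Vec m) (yd : ℝ → Vec m)
    (hx : ∀ t, 0 ≤ t → HasDerivAt x (-Fsur f Gyx v (x t) (y t)) t)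
    (hy : ∀ t, 0 ≤ t → HasDerivAt y (yd t) t)
    (hyd : ∀ t, 0 ≤ t →
      Gyy (x t) (y t) (yd t)
        = -(β • grady g (x t) (y t) + Gyx (x t) (y t) (-Fsur f Gyx v (x t) (y t))))
    -- `x*` is a global minimizer of the implicit objective `ℓ(x) = f(x, y*(x))`
    (xstar : Vec n)
    (hxstar : ∀ x' : Vec n, f xstar (ystar xstar) ≤ f x' (ystar x')) :
    ∀ t, 0 < t →
      (1 / (2 * t)) * ∫ τ in (0:ℝ)..t, ‖gradient (fun x' => f x' (ystar x')) (x τ)‖ ^ 2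
        ≤ (1 / t) * (f (x 0) (ystar (x 0)) - f xstar (ystar xstar)
            + (M₁ ^ 2 / (4 * β * μg ^ 2)) * ‖grady g (x 0) (y 0)‖ ^ 2) := by
  intro t ht
  exact stmt_17_general hf hg hμg hsc hGyx hGyy hystar hM₁.le hM₁P hβ
    (fun s hs => (hx s hs).hasDerivWithinAt) (fun s hs => (hy s hs).hasDerivWithinAt) hyd hxstar ht

end
end
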